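/- Case B1: Let l1, l2 be distinct odd primes with l1 ≡ 3 (mod 4) and l2 ≡ 1 (mod 4), let r1, r2 ≥ 1, and let N = l1^{r1} l2^{r2}. Assume the multiplicative order of p modulo l1^{r1} is φ(l1^{r1}), the multiplicative order of p modulo l2^{r2} is φ(l2^{r2}), and f = φ(N)/2. Set h12 = h(Q(√-l1 l2)). Then h12 is even, and there exist integers a', b' such that 4 p^{h12} = (a')² + l1 l2 (b')², a' ≡ 2 p^{h12/2} (mod l1), and G(χ) = (1/2) p^{(f - h12)/2} (a' + b' √-(l1 l2)). -/

import Mathlib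

open Complex Polynomial IntermediateField

/-- The complex primitive `p`-th root of unity `exp(2πi/p)`. -/
noncomputable def zetaP (p : ℕ) : ℂ := Complex.exp (2 * Real.pi * Complex.I / p)

/-- The Gauss sum `G(χ^λ) = ∑_{x ∈ F, x ≠ 0} χ^λ(x) ζ_p^{T(x)}`, where
`T` is the trace map from `F` down to `ZMod p`. -/
noncomputable def gaussSumN (p : ℕ) {F : Type} [Field F] [Fintype F] [Algebra (ZMod p) F]
    (χ : MulChar F ℂ) (lam : ℕ) : ℂ :=
  letI : DecidableEq F := Classical.decEq F
  ∑ x ∈ Finset.univ.filter (fun x : F => x ≠ 0),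
    (χ ^ lam) x * zetaP p ^ (Algebra.trace (ZMod p) F x).val

/-- `√-m = i√m ∈ ℂ`. -/
noncomputable def sqrtNeg (m : ℕ) : ℂ := Real.sqrt m * Complex.I

theorem sqrtNeg_sq (m : ℕ) : sqrtNeg m ^ 2 = -(m : ℂ) := by
  have h : ((Real.sqrt m : ℝ) : ℂ) ^ 2 = ((m : ℝ) : ℂ) := by
    rw [← Complex.ofReal_pow, Real.sq_sqrt (by positivity)]
  simp only [sqrtNeg, mul_pow, Complex.I_sq, h]
  push_cast
  ring

theorem isIntegral_sqrtNeg (m : ℕ) : IsIntegral ℚ (sqrtNeg m) := by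
  refine ⟨X ^ 2 + C (m : ℚ), monic_X_pow_add_C _ (by norm_num), ?_⟩
  simp [sqrtNeg_sq]

/-- The class number `h(ℚ(√-m))` of the quadratic field `ℚ(√-m) ⊆ ℂ`. -/
noncomputable def classNumSqrtNeg (m : ℕ) : ℕ :=
  haveI : FiniteDimensional ℚ ℚ⟮sqrtNeg m⟯ :=
    IntermediateField.adjoin.finiteDimensional (isIntegral_sqrtNeg m)
  haveI : CharZero ℚ⟮sqrtNeg m⟯ :=
    charZero_of_injective_algebraMap (algebraMap ℚ ℚ⟮sqrtNeg m⟯).injective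
  haveI : NumberField ℚ⟮sqrtNeg m⟯ := ⟨⟩
  NumberField.classNumber ℚ⟮sqrtNeg m⟯

/-- `√p* = √p` if `p ≡ 1 (mod 4)` and `i√p` if `p ≡ 3 (mod 4)`. -/
noncomputable def sqrtPStar (p : ℕ) : ℂ :=
  if p % 4 = 1 then (Real.sqrt p : ℂ) else (Real.sqrt p : ℂ) * Complex.I

open Filter Topology Real in
lemma A_bound {a : ℝ} (ha : 0 < a) (ha1 : a < 1) {s : ℝ} (hs : 1 ≤ s) (hs2 : s ≤ 2) (n : ℕ) :
    |((n:ℝ)+a)^(-s) - ((n:ℝ)+1-a)^(-s)| ≤ 2 * (((n:ℝ) + 0)^(-2:ℝ) + if n = 0 then (a^(-2:ℝ) + (1-a)^(-2:ℝ)) else 0) := by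
  -- mean value
  have key : ∀ x y : ℝ, 0 < x → x ≤ y → y ≤ x + 1 → 
      |x^(-s) - y^(-s)| ≤ 2 * x^(-s-1) := by
    intro x y hx hxy hyx
    have hd : ∀ z ∈ Set.Icc x y, HasDerivWithinAt (fun z : ℝ => z^(-s)) (-s * z^(-s-1)) (Set.Icc x y) z := by
      intro z hz
      exact (Real.hasDerivAt_rpow_const (Or.inl (by linarith [hz.1]))).hasDerivWithinAt
    have hb : ∀ z ∈ Set.Icc x y, ‖(-s * z^(-s-1))‖ ≤ 2 * x^(-s-1) := by
      intro z hz
      have hz0 : 0 < z := by linarith [hz.1]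
      rw [norm_mul, Real.norm_eq_abs, Real.norm_eq_abs, abs_neg, abs_of_pos (by linarith : 0 < s), abs_of_pos (Real.rpow_pos_of_pos hz0 _)]
      have : z^(-s-1) ≤ x^(-s-1) := Real.rpow_le_rpow_of_nonpos hx hz.1 (by linarith)
      have h0 : 0 < z^(-s-1) := Real.rpow_pos_of_pos hz0 _
      nlinarith
    have := Convex.norm_image_sub_le_of_norm_hasDerivWithin_le hd hb (convex_Icc x y)
      (Set.right_mem_Icc.2 hxy) (Set.left_mem_Icc.2 hxy)
    rw [Real.norm_eq_abs, Real.norm_eq_abs, abs_sub_comm x y, abs_of_nonneg (by linarith : 0 ≤ y - x)] at this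
    have h0 : 0 < x^(-s-1) := Real.rpow_pos_of_pos hx _
    refine this.trans ?_
    nlinarith
  rcases Nat.eq_zero_or_pos n with rfl | hn
  · have h2 : ∀ x : ℝ, 0 < x → x < 1 → 0 < x^(-s) ∧ x^(-s) ≤ x^(-2:ℝ) := fun x hx hx1 =>
      ⟨Real.rpow_pos_of_pos hx _, Real.rpow_le_rpow_of_exponent_ge hx hx1.le (by linarith)⟩
    have h3 := h2 a ha ha1
    have h4 := h2 (1-a) (by linarith) (by linarith)
    have h5 : (0:ℝ) ≤ (((0:ℕ):ℝ) + 0)^(-2:ℝ) := by positivity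
    simp only [if_true, Nat.cast_zero, zero_add] at *
    rw [abs_le]; constructor <;> linarith
  · have hn1 : (1:ℝ) ≤ n := by exact_mod_cast hn
    have h2 : ∀ x : ℝ, (n:ℝ) ≤ x → x^(-s-1) ≤ (n:ℝ)^(-2:ℝ) := by
      intro x hx
      calc x^(-s-1) ≤ (n:ℝ)^(-s-1) := Real.rpow_le_rpow_of_nonpos (by linarith) hx (by linarith)
        _ ≤ _ := Real.rpow_le_rpow_of_exponent_le hn1 (by linarith)
    rw [if_neg hn.ne', add_zero, add_zero]
    rcases le_total a (1-a) with h | h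
    · exact (key (n+a) (n+1-a) (by linarith) (by linarith) (by linarith)).trans (by linarith [h2 (n+a) (by linarith)])
    · rw [abs_sub_comm]
      exact (key (n+1-a) (n+a) (by linarith) (by linarith) (by linarith)).trans (by linarith [h2 (n+1-a) (by linarith)])

open Filter Topology Real HurwitzZeta in
lemma A_hurwitz {a : ℝ} (ha : 0 < a) (ha1 : a < 1) :
    HasSum (fun n : ℕ => ((((n:ℝ)+a)^(-1:ℝ) - ((n:ℝ)+1-a)^(-1:ℝ) : ℝ) : ℂ) / 2) (hurwitzZetaOdd a 1) := by
  have hsumm : Summable (fun n : ℕ => 2 * (((n:ℝ) + 0)^(-2:ℝ) + if n = 0 then (a^(-2:ℝ) + (1-a)^(-2:ℝ)) else 0)) := by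
    apply Summable.mul_left
    apply Summable.add
    · simp only [add_zero]
      exact Real.summable_nat_rpow.2 (by norm_num)
    · exact summable_of_ne_finset_zero (s := {0}) (by intro b hb; simp at hb; simp [hb])
  have hterm : ∀ s : ℝ, 1 ≤ s → s ≤ 2 → ∀ n : ℕ, ‖((((n:ℝ)+a)^(-s:ℝ) - ((n:ℝ)+1-a)^(-s:ℝ) : ℝ) : ℂ) / 2‖ ≤ 2 * (((n:ℝ) + 0)^(-2:ℝ) + if n = 0 then (a^(-2:ℝ) + (1-a)^(-2:ℝ)) else 0) := by
    intro s h1 h2 n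
    rw [norm_div, Complex.norm_real, Real.norm_eq_abs]
    have := A_bound ha ha1 h1 h2 n
    have h0 := abs_nonneg (((n:ℝ)+a)^(-s:ℝ) - ((n:ℝ)+1-a)^(-s:ℝ))
    simp only [Complex.norm_ofNat]
    linarith
  have hs1 : Summable (fun n : ℕ => ((((n:ℝ)+a)^(-1:ℝ) - ((n:ℝ)+1-a)^(-1:ℝ) : ℝ) : ℂ) / 2) :=
    Summable.of_norm_bounded hsumm (hterm 1 le_rfl (by norm_num))
  have ht : Tendsto (fun s : ℝ => ∑' n : ℕ, ((((n:ℝ)+a)^(-s:ℝ) - ((n:ℝ)+1-a)^(-s:ℝ) : ℝ) : ℂ) / 2) (𝓝[>] 1)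
      (𝓝 (∑' n : ℕ, ((((n:ℝ)+a)^(-1:ℝ) - ((n:ℝ)+1-a)^(-1:ℝ) : ℝ) : ℂ) / 2)) := by
    refine tendsto_tsum_of_dominated_convergence hsumm ?_ ?_
    · intro n
      apply tendsto_nhdsWithin_of_tendsto_nhds
      have hn : (0:ℝ) ≤ n := Nat.cast_nonneg n
      have h1 : ContinuousAt (fun s : ℝ => ((n:ℝ)+a)^(-s:ℝ) - ((n:ℝ)+1-a)^(-s:ℝ)) 1 := by
        apply ContinuousAt.sub
        · exact (Real.continuousAt_const_rpow (by linarith)).comp continuousAt_neg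
        · exact (Real.continuousAt_const_rpow (by linarith)).comp continuousAt_neg
      exact (Complex.continuous_ofReal.continuousAt.comp h1).div_const 2
    · have : Set.Ioc (1:ℝ) 2 ∈ 𝓝[>] (1:ℝ) := Ioc_mem_nhdsGT (by norm_num)
      filter_upwards [this] with s hs n
      exact hterm s hs.1.le hs.2 n
  have ht2 : Tendsto (fun s : ℝ => hurwitzZetaOdd a (s:ℂ)) (𝓝[>] 1) (𝓝 (hurwitzZetaOdd a 1)) := by
    apply tendsto_nhdsWithin_of_tendsto_nhds
    have : Continuous (fun s : ℝ => hurwitzZetaOdd a (s:ℂ)) := (differentiable_hurwitzZetaOdd _).continuous.comp Complex.continuous_ofReal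
    simpa using this.tendsto 1
  have heq : (fun s : ℝ => hurwitzZetaOdd a (s:ℂ)) =ᶠ[𝓝[>] 1] (fun s : ℝ => ∑' n : ℕ, ((((n:ℝ)+a)^(-s:ℝ) - ((n:ℝ)+1-a)^(-s:ℝ) : ℝ) : ℂ) / 2) := by
    filter_upwards [self_mem_nhdsWithin] with s hs
    have hs' : 1 < (s:ℂ).re := by simpa using hs
    rw [← (hasSum_nat_hurwitzZetaOdd_of_mem_Icc ⟨ha.le, ha1.le⟩ hs').tsum_eq]
    congr 1; ext n
    have hn : (0:ℝ) ≤ n := Nat.cast_nonneg n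
    rw [Complex.ofReal_sub, Complex.ofReal_cpow (by linarith), Complex.ofReal_cpow (by linarith)]
    push_cast
    rw [Complex.cpow_neg, Complex.cpow_neg, one_div, one_div]
  rw [tendsto_nhds_unique ht2 (ht.congr' heq.symm)]
  exact hs1.hasSum

open Filter Topology Real HurwitzZeta in
lemma A_cot {a : ℝ} (ha : 0 < a) (ha1 : a < 1) :
    hurwitzZetaOdd a 1 = π / 2 * Complex.cot (π * a) := by
  have hz : (a:ℂ) ∈ Complex.integerComplement := by
    rw [Complex.mem_integerComplement_iff]
    rintro ⟨n, hn⟩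
    have : (n:ℝ) = a := by exact_mod_cast hn
    have h1 : (0:ℝ) < n := by linarith
    have h2 : (n:ℝ) < 1 := by linarith
    have h1' : 0 < n := by exact_mod_cast h1
    have h2' : n < 1 := by exact_mod_cast h2
    omega
  have h1 := (A_hurwitz ha ha1).tendsto_sum_nat
  have h2 : Tendsto (fun n => ∑ j ∈ Finset.range n, (1 / ((a:ℂ) - (j+1)) + 1 / ((a:ℂ) + (j+1)))) atTop (𝓝 (π * Complex.cot (π * a) - 1 / a)) :=
    tendsto_logDeriv_euler_cot_sub hz
  have h3 : Tendsto (fun n : ℕ => 1 / ((a:ℂ) + n)) atTop (𝓝 0) := by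
    have : Tendsto (fun n : ℕ => 1 / (a + (n:ℝ))) atTop (𝓝 0) := by
      apply Tendsto.div_atTop tendsto_const_nhds
      exact tendsto_atTop_add_const_left _ _ tendsto_natCast_atTop_atTop
    have := (Complex.continuous_ofReal.tendsto 0).comp this
    refine Tendsto.congr ?_ this
    intro n; simp
  have h4 := ((h2.sub h3).add_const (1/(a:ℂ))).div_const 2
  have h5 : ∀ n : ℕ, (∑ j ∈ Finset.range n, (1 / ((a:ℂ) - (j+1)) + 1 / ((a:ℂ) + (j+1))) - 1/((a:ℂ)+n) + 1/(a:ℂ))/2 = ∑ j ∈ Finset.range n, ((((j:ℝ)+a)^(-1:ℝ) - ((j:ℝ)+1-a)^(-1:ℝ) : ℝ) : ℂ) / 2 := by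
    intro n
    induction n with
    | zero => simp
    | succ n ih =>
      rw [Finset.sum_range_succ, Finset.sum_range_succ, ← ih]
      rw [Real.rpow_neg_one, Real.rpow_neg_one]
      push_cast
      have : (a:ℂ) - (n+1) = -(n+1-a) := by ring
      rw [this, one_div, one_div, inv_neg]
      ring
  have h6 := tendsto_nhds_unique h1 (h4.congr h5)
  rw [h6]; ring

lemma chin_fst (l1 l2 : ℕ) (h : l1.Coprime l2) (a : ZMod (l1*l2)) :
    (ZMod.chineseRemainder h a).1 = ZMod.castHom (dvd_mul_right l1 l2) (ZMod l1) a := by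
  have : (RingHom.fst _ _).comp (ZMod.chineseRemainder h).toRingHom = ZMod.castHom (dvd_mul_right l1 l2) (ZMod l1) := Subsingleton.elim _ _
  exact DFunLike.congr_fun this a
lemma chin_snd (l1 l2 : ℕ) (h : l1.Coprime l2) (a : ZMod (l1*l2)) :
    (ZMod.chineseRemainder h a).2 = ZMod.castHom (dvd_mul_left l2 l1) (ZMod l2) a := by
  have : (RingHom.snd _ _).comp (ZMod.chineseRemainder h).toRingHom = ZMod.castHom (dvd_mul_left l2 l1) (ZMod l2) := Subsingleton.elim _ _
  exact DFunLike.congr_fun this a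

/-- the quadratic character attached to `ℚ(√-l1 l2)`, integer valued -/
noncomputable def psiZ (l1 l2 : ℕ) [Fact l1.Prime] [Fact l2.Prime] (h : l1.Coprime l2) :
    MulChar (ZMod (l1 * l2)) ℤ where
  toFun a := quadraticChar (ZMod l1) (ZMod.castHom (dvd_mul_right l1 l2) (ZMod l1) a) *
    quadraticChar (ZMod l2) (ZMod.castHom (dvd_mul_left l2 l1) (ZMod l2) a)
  map_one' := by simp
  map_mul' x y := by
    simp only [map_mul]; ring
  map_nonunit' a ha := by
    by_contra hne
    apply ha
    have h1 : ZMod.castHom (dvd_mul_right l1 l2) (ZMod l1) a ≠ 0 := by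
      intro h0; rw [h0] at hne; simp at hne
    have h2 : ZMod.castHom (dvd_mul_left l2 l1) (ZMod l2) a ≠ 0 := by
      intro h0; rw [h0] at hne; simp at hne
    have : IsUnit (ZMod.chineseRemainder h a) := by
      rw [Prod.isUnit_iff, chin_fst, chin_snd]
      exact ⟨isUnit_iff_ne_zero.2 h1, isUnit_iff_ne_zero.2 h2⟩
    exact (MulEquiv.isUnit_map (ZMod.chineseRemainder h)).1 this

lemma psiZ_apply (l1 l2 : ℕ) [Fact l1.Prime] [Fact l2.Prime] (h : l1.Coprime l2) (a) :
  psiZ l1 l2 h a = quadraticChar (ZMod l1) (ZMod.castHom (dvd_mul_right l1 l2) (ZMod l1) a) *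
    quadraticChar (ZMod l2) (ZMod.castHom (dvd_mul_left l2 l1) (ZMod l2) a) := rfl

lemma psiZ_nat (l1 l2 : ℕ) [Fact l1.Prime] [Fact l2.Prime] (h : l1.Coprime l2) (a : ℕ) :
  psiZ l1 l2 h a = quadraticChar (ZMod l1) a * quadraticChar (ZMod l2) a := by
  rw [psiZ_apply, map_natCast (ZMod.castHom _ _), map_natCast (ZMod.castHom _ _)]

lemma psiZ_neg_one (l1 l2 : ℕ) [Fact l1.Prime] [Fact l2.Prime] (h : l1.Coprime l2)
    (hl1m : l1 % 4 = 3) (hl2m : l2 % 4 = 1) : psiZ l1 l2 h (-1) = -1 := by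
  rw [psiZ_apply, map_neg (ZMod.castHom _ _), map_neg (ZMod.castHom _ _), map_one (ZMod.castHom _ _), map_one (ZMod.castHom _ _), quadraticChar_neg_one, quadraticChar_neg_one,
    ZMod.card, ZMod.card, ZMod.χ₄_nat_three_mod_four hl1m, ZMod.χ₄_nat_one_mod_four hl2m]
  · norm_num
  · rw [ZMod.ringChar_zmod_n]; rintro rfl; norm_num at hl2m
  · rw [ZMod.ringChar_zmod_n]; rintro rfl; norm_num at hl1m

noncomputable def psiC (l1 l2 : ℕ) [Fact l1.Prime] [Fact l2.Prime] (h : l1.Coprime l2) :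
    DirichletCharacter ℂ (l1 * l2) := (psiZ l1 l2 h).ringHomComp (Int.castRingHom ℂ)

lemma psiC_apply (l1 l2 : ℕ) [Fact l1.Prime] [Fact l2.Prime] (h : l1.Coprime l2) (a) :
  psiC l1 l2 h a = (psiZ l1 l2 h a : ℂ) := rfl

noncomputable def psiG (l1 l2 : ℕ) [Fact l1.Prime] [Fact l2.Prime] (h : l1.Coprime l2) : ℂ :=
  ∑ a : ZMod (l1*l2), psiC l1 l2 h a * ZMod.stdAddChar a

lemma psiG_aux (l1 l2 : ℕ) [Fact l1.Prime] [Fact l2.Prime] (h : l1.Coprime l2)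
    (hl1m : l1 % 4 = 3) (hl2m : l2 % 4 = 1) :
    ∃ g : ℂ, g ^ 2 = -((l1 * l2 : ℕ) : ℂ) ∧ ∀ k : ZMod (l1*l2), ∑ a : ZMod (l1*l2), psiC l1 l2 h a * ZMod.stdAddChar (k * a) = psiC l1 l2 h k * g := by
  let e : AddChar (ZMod (l1*l2)) ℂ := ZMod.stdAddChar
  let c := ZMod.chineseRemainder h
  let χ1 : MulChar (ZMod l1) ℂ := (quadraticChar (ZMod l1)).ringHomComp (Int.castRingHom ℂ)
  let χ2 : MulChar (ZMod l2) ℂ := (quadraticChar (ZMod l2)).ringHomComp (Int.castRingHom ℂ)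
  let e1 : AddChar (ZMod l1) ℂ := e.compAddMonoidHom
    ((c.symm.toAddEquiv.toAddMonoidHom).comp (AddMonoidHom.inl (ZMod l1) (ZMod l2)))
  let e2 : AddChar (ZMod l2) ℂ := e.compAddMonoidHom
    ((c.symm.toAddEquiv.toAddMonoidHom).comp (AddMonoidHom.inr (ZMod l1) (ZMod l2)))
  have he1 : ∀ x, e1 x = e (c.symm (x, 0)) := fun x => rfl
  have he2 : ∀ x, e2 x = e (c.symm (0, x)) := fun x => rfl
  have einj : Function.Injective e := ZMod.injective_stdAddChar
  have h1n : e1.IsPrimitive := by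
    apply AddChar.IsPrimitive.of_ne_one
    intro h0
    have : e1 1 = 1 := by rw [h0]; rfl
    rw [he1, ← AddChar.map_zero_eq_one e] at this
    have := einj this
    rw [EmbeddingLike.map_eq_zero_iff] at this
    simp at this
  have h2n : e2.IsPrimitive := by
    apply AddChar.IsPrimitive.of_ne_one
    intro h0
    have : e2 1 = 1 := by rw [h0]; rfl
    rw [he2, ← AddChar.map_zero_eq_one e] at this
    have := einj this
    rw [EmbeddingLike.map_eq_zero_iff] at this
    simp at this
  have h21 : ringChar (ZMod l1) ≠ 2 := by rw [ZMod.ringChar_zmod_n]; rintro rfl; norm_num at hl1m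
  have h22 : ringChar (ZMod l2) ≠ 2 := by rw [ZMod.ringChar_zmod_n]; rintro rfl; norm_num at hl2m
  have hr : ringChar ℂ = 0 := ringChar.eq_zero
  have q1 : χ1.IsQuadratic := (quadraticChar_isQuadratic (ZMod l1)).comp _
  have q2 : χ2.IsQuadratic := (quadraticChar_isQuadratic (ZMod l2)).comp _
  have n1 : χ1 ≠ 1 := (MulChar.ringHomComp_ne_one_iff (RingHom.injective_int _)).2 (quadraticChar_ne_one h21)
  have n2 : χ2 ≠ 1 := (MulChar.ringHomComp_ne_one_iff (RingHom.injective_int _)).2 (quadraticChar_ne_one h22)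
  have s1 := gaussSum_sq n1 q1 h1n
  have s2 := gaussSum_sq n2 q2 h2n
  refine ⟨gaussSum χ1 e1 * gaussSum χ2 e2, ?_, ?_⟩
  · rw [mul_pow, s1, s2]
    have a1 : χ1 (-1) = -1 := by
      simp only [χ1, MulChar.ringHomComp_apply]
      rw [quadraticChar_neg_one h21, ZMod.card, ZMod.χ₄_nat_three_mod_four hl1m]; simp
    have a2 : χ2 (-1) = 1 := by
      simp only [χ2, MulChar.ringHomComp_apply]
      rw [quadraticChar_neg_one h22, ZMod.card, ZMod.χ₄_nat_one_mod_four hl2m]; simp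
    rw [a1, a2, ZMod.card, ZMod.card]; push_cast; ring
  · intro k
    have sh : ∀ {l : ℕ} [Fact l.Prime] (χ : MulChar (ZMod l) ℂ) (hq : χ.IsQuadratic) (hn : χ ≠ 1) (ψ : AddChar (ZMod l) ℂ) (k : ZMod l),
        ∑ x, χ x * ψ (k * x) = χ k * gaussSum χ ψ := by
      intro l _ χ hq hn ψ k
      by_cases hk : k = 0
      · subst hk
        simp [MulChar.sum_eq_zero_of_ne_one hn, MulChar.map_nonunit]
      · have := gaussSum_mulShift χ ψ (Units.mk0 k hk)
        rw [← this]
        simp only [Units.val_mk0]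
        rw [← mul_assoc, ← sq]
        have : χ k ^ 2 = 1 := by
          rw [← MulChar.pow_apply' _ (by norm_num), hq.sq_eq_one, MulChar.one_apply (isUnit_iff_ne_zero.2 hk)]
        rw [this, one_mul]
        rfl
    rw [show psiC l1 l2 h k * (gaussSum χ1 e1 * gaussSum χ2 e2) = (χ1 (c k).1 * gaussSum χ1 e1) * (χ2 (c k).2 * gaussSum χ2 e2) by
      rw [psiC_apply, psiZ_apply]; push_cast
      simp only [χ1, χ2, MulChar.ringHomComp_apply, c, chin_fst, chin_snd]
      change ((_:ℂ) * _) * _ = _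
      simp only [Int.coe_castRingHom]
      rw [mul_mul_mul_comm]]
    rw [← sh χ1 q1 n1, ← sh χ2 q2 n2, Finset.sum_mul_sum, ← Finset.sum_product']
    refine Fintype.sum_equiv c.toEquiv _ _ ?_
    intro a
    have e3 : e (k * a) = e1 ((c k).1 * (c a).1) * e2 ((c k).2 * (c a).2) := by
      rw [he1, he2, ← AddChar.map_add_eq_mul, ← map_add]
      congr 1
      rw [RingEquiv.eq_symm_apply, map_mul]
      ext <;> simp
    change _ * e (k * a) = (χ1 (c a).1 * e1 ((c k).1 * (c a).1)) * (χ2 (c a).2 * e2 ((c k).2 * (c a).2))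
    rw [e3, mul_mul_mul_comm]
    congr 1
    rw [psiC_apply, psiZ_apply]; push_cast
    simp only [χ1, χ2, MulChar.ringHomComp_apply, c, chin_fst, chin_snd, Int.coe_castRingHom]

lemma psiG_sq (l1 l2 : ℕ) [Fact l1.Prime] [Fact l2.Prime] (h : l1.Coprime l2)
    (hl1m : l1 % 4 = 3) (hl2m : l2 % 4 = 1) : psiG l1 l2 h ^ 2 = -((l1 * l2 : ℕ) : ℂ) := by
  obtain ⟨g, hg, hk⟩ := psiG_aux l1 l2 h hl1m hl2m
  have := hk 1
  simp only [one_mul, map_one] at this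
  rw [psiG, this, hg]

lemma psiG_shift (l1 l2 : ℕ) [Fact l1.Prime] [Fact l2.Prime] (h : l1.Coprime l2)
    (hl1m : l1 % 4 = 3) (hl2m : l2 % 4 = 1) (k : ZMod (l1*l2)) :
    ∑ a : ZMod (l1*l2), psiC l1 l2 h a * ZMod.stdAddChar (k * a) = psiC l1 l2 h k * psiG l1 l2 h := by
  obtain ⟨g, hg, hk⟩ := psiG_aux l1 l2 h hl1m hl2m
  have := hk 1
  simp only [one_mul, map_one] at this
  rw [psiG, this, hk]

lemma psiC_odd (l1 l2 : ℕ) [Fact l1.Prime] [Fact l2.Prime] (h : l1.Coprime l2)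
    (hl1m : l1 % 4 = 3) (hl2m : l2 % 4 = 1) : (psiC l1 l2 h).Odd := by
  rw [DirichletCharacter.Odd, psiC_apply, psiZ_neg_one l1 l2 h hl1m hl2m]; simp

open Real in
lemma C_L1 (l1 l2 : ℕ) [Fact l1.Prime] [Fact l2.Prime] (h : l1.Coprime l2)
    (hl1m : l1 % 4 = 3) (hl2m : l2 % 4 = 1) :
    DirichletCharacter.LFunction (psiC l1 l2 h) 1 = π / (2 * ((l1*l2:ℕ):ℂ)) *
      ∑ j : ZMod (l1*l2), psiC l1 l2 h j * Complex.cot (π * ((j.val / (l1*l2:ℕ) : ℝ) : ℂ)) := by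
  have hm : 0 < l1 * l2 := Nat.pos_of_ne_zero (NeZero.ne _)
  rw [DirichletCharacter.LFunction, ZMod.LFunction_def_odd (psiC_odd l1 l2 h hl1m hl2m).to_fun]
  have : ∀ j : ZMod (l1*l2), psiC l1 l2 h j * HurwitzZeta.hurwitzZetaOdd (ZMod.toAddCircle j) 1 = 
      (π/2) * (psiC l1 l2 h j * Complex.cot (π * ((j.val / (l1*l2:ℕ) : ℝ) : ℂ))) := by
    intro j
    by_cases hj : j = 0
    · subst hj
      have : psiC l1 l2 h 0 = 0 := by
        apply MulChar.map_nonunit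
        have : Fact (1 < l1*l2) := ⟨by have := (Fact.out : l1.Prime).two_le; have := (Fact.out : l2.Prime).two_le; nlinarith⟩
        simp
      rw [this]; ring
    · rw [ZMod.toAddCircle_apply, A_cot]
      · ring
      · have : 0 < j.val := Nat.pos_of_ne_zero (by rwa [Ne, ZMod.val_eq_zero])
        positivity
      · rw [div_lt_one (by exact_mod_cast hm)]
        exact_mod_cast ZMod.val_lt j
  rw [Finset.sum_congr rfl (fun j _ => this j), ← Finset.mul_sum, Complex.cpow_neg_one]
  have : ((l1*l2:ℕ):ℂ) ≠ 0 := by exact_mod_cast hm.ne'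
  field_simp

lemma C_geom {n : ℕ} {z : ℂ} (hz : z ^ n = 1) (h1 : z ≠ 1) :
    ∑ k ∈ Finset.range n, (k:ℂ) * z ^ k = n / (z - 1) := by
  have h : ∀ n : ℕ, (z - 1) * ∑ k ∈ Finset.range n, (k:ℂ) * z ^ k = n * z^n - z * ∑ k ∈ Finset.range n, z^k := by
    intro n
    induction n with
    | zero => simp
    | succ n ih =>
      rw [Finset.sum_range_succ, Finset.sum_range_succ, mul_add, ih]
      push_cast; ring
  have h2 : ∑ k ∈ Finset.range n, z^k = 0 := by
    have := mul_geom_sum z n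
    rw [hz, sub_self] at this
    exact (mul_eq_zero.1 this).resolve_left (sub_ne_zero.2 h1)
  have h3 := h n
  rw [h2, hz] at h3
  rw [eq_div_iff (sub_ne_zero.2 h1), mul_comm, h3]; ring

open Real in
lemma C_cot {x : ℝ} (hx : 0 < x) (hx1 : x < 1) :
    1 / (Complex.exp (2 * π * Complex.I * x) - 1) = -1/2 - Complex.I / 2 * Complex.cot (π * (x:ℂ)) := by
  have hs : Complex.sin (π * (x:ℂ)) ≠ 0 := by
    have : (Real.sin (π * x)) ≠ 0 := (Real.sin_pos_of_pos_of_lt_pi (by positivity) (by nlinarith [pi_pos])).ne'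
    exact_mod_cast this
  have he : Complex.exp (2 * π * Complex.I * x) = (Complex.cos (π * x) + Complex.sin (π*x) * Complex.I)^2 := by
    rw [← Complex.exp_mul_I, ← Complex.exp_nat_mul]; congr 1; push_cast; ring
  have hd : Complex.exp (2 * π * Complex.I * x) - 1 = 2 * Complex.I * Complex.sin (π * x) * (Complex.cos (π * x) + Complex.sin (π*x) * Complex.I) := by
    rw [he]
    have := Complex.sin_sq_add_cos_sq (π * (x:ℂ))
    linear_combination this + (-Complex.sin (π * x)^2) * Complex.I_sq
  have hne : (Complex.cos (π * x) + Complex.sin (π*x) * Complex.I) ≠ 0 := by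
    rw [← Complex.exp_mul_I]; exact Complex.exp_ne_zero _
  rw [hd, Complex.cot]
  rw [div_eq_iff (by simp [hs, hne])]
  have := Complex.sin_sq_add_cos_sq (π * (x:ℂ))
  field_simp
  linear_combination (-1) * this + (- Complex.sin (π * x) * Complex.cos (π * x) * Complex.I + Complex.cos (π*x)^2 + Complex.sin (π*x)^2+ 2*Complex.sin (π * x) * Complex.cos (π * x) * Complex.I) * Complex.I_sq

open Real in
lemma C_fin (l1 l2 : ℕ) [Fact l1.Prime] [Fact l2.Prime] (h : l1.Coprime l2)
    (hl1m : l1 % 4 = 3) (hl2m : l2 % 4 = 1) :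
    (-((l1*l2:ℕ):ℂ) * Complex.I / 2) * ∑ j : ZMod (l1*l2), psiC l1 l2 h j * Complex.cot (π * ((j.val / (l1*l2:ℕ) : ℝ) : ℂ)) =
      psiG l1 l2 h * ∑ k : ZMod (l1*l2), psiC l1 l2 h k * (k.val : ℂ) := by
  have hm : 0 < l1 * l2 := Nat.pos_of_ne_zero (NeZero.ne _)
  have h1m : 1 < l1 * l2 := by have := (Fact.out : l1.Prime).two_le; have := (Fact.out : l2.Prime).two_le; nlinarith
  have : Fact (1 < l1*l2) := ⟨h1m⟩
  have hp0 : psiC l1 l2 h 0 = 0 := by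
    apply MulChar.map_nonunit
    simp
  have hne1 : psiC l1 l2 h ≠ 1 := by
    intro h1
    have := psiC_odd l1 l2 h hl1m hl2m
    rw [DirichletCharacter.Odd, h1, MulChar.one_apply (by simp)] at this
    norm_num at this
  have hsum0 := MulChar.sum_eq_zero_of_ne_one hne1
  have key : ∀ j : ZMod (l1*l2), psiC l1 l2 h j * ∑ k : ZMod (l1*l2), (k.val : ℂ) * ZMod.stdAddChar (k * j)
      = psiC l1 l2 h j * (((l1*l2:ℕ):ℂ) * (-1/2)) +  (-((l1*l2:ℕ):ℂ) * Complex.I / 2) * (psiC l1 l2 h j * Complex.cot (π * ((j.val / (l1*l2:ℕ) : ℝ) : ℂ))) := by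
    intro j
    by_cases hj : j = 0
    · subst hj; rw [hp0]; ring
    have hjv : 0 < j.val := Nat.pos_of_ne_zero (by rwa [Ne, ZMod.val_eq_zero])
    set z : ℂ := ZMod.stdAddChar j with hz
    have hz1 : z ≠ 1 := by
      intro h0; apply hj
      apply ZMod.injective_stdAddChar (N := l1*l2)
      rw [← hz, h0, AddChar.map_zero_eq_one]
    have hpow : ∀ k : ℕ, ZMod.stdAddChar ((k : ZMod (l1*l2)) * j) = z ^ k := by
      intro k; rw [hz, ← AddChar.map_nsmul_eq_pow, nsmul_eq_mul]
    have hzn : z ^ (l1*l2) = 1 := by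
      rw [← hpow, ZMod.natCast_self, zero_mul, AddChar.map_zero_eq_one]
    have hs : ∑ k : ZMod (l1*l2), (k.val : ℂ) * ZMod.stdAddChar (k * j) = ∑ k ∈ Finset.range (l1*l2), (k:ℂ) * z ^ k := by
      refine Finset.sum_bij (fun k _ => k.val) ?_ ?_ ?_ ?_
      · intro k _; exact Finset.mem_range.2 (ZMod.val_lt k)
      · intro a _ b _ hab; exact ZMod.val_injective _ hab
      · intro b hb; exact ⟨b, Finset.mem_univ _, ZMod.val_cast_of_lt (Finset.mem_range.1 hb)⟩
      · intro k _
        rw [← hpow, ZMod.natCast_zmod_val]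
    rw [hs, C_geom hzn hz1]
    have hze : z = Complex.exp (2 * π * Complex.I * ((j.val / (l1*l2:ℕ) : ℝ) : ℂ)) := by
      rw [hz, ZMod.stdAddChar_apply, ZMod.toCircle_apply]
      congr 1
      push_cast
      ring
    have hc := C_cot (x := (j.val / (l1*l2:ℕ) : ℝ)) (by positivity) (by rw [div_lt_one (by exact_mod_cast hm)]; exact_mod_cast ZMod.val_lt j)
    rw [← hze] at hc
    rw [div_eq_mul_one_div, hc]
    ring
  have e1 : ∑ j : ZMod (l1*l2), psiC l1 l2 h j * ∑ k : ZMod (l1*l2), (k.val : ℂ) * ZMod.stdAddChar (k * j) = psiG l1 l2 h * ∑ k : ZMod (l1*l2), psiC l1 l2 h k * (k.val : ℂ) := by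
    simp_rw [Finset.mul_sum]
    rw [Finset.sum_comm]
    refine Finset.sum_congr rfl fun k _ => ?_
    rw [show psiG l1 l2 h * (psiC l1 l2 h k * (k.val : ℂ)) = (k.val:ℂ) * (psiC l1 l2 h k * psiG l1 l2 h) by ring, ← psiG_shift l1 l2 h hl1m hl2m, Finset.mul_sum]
    refine Finset.sum_congr rfl fun j _ => ?_
    ring
  rw [← e1, Finset.sum_congr rfl (fun j _ => key j), Finset.sum_add_distrib, ← Finset.sum_mul, hsum0, zero_mul, zero_add, ← Finset.mul_sum]

open Real in
lemma C_main (l1 l2 : ℕ) [Fact l1.Prime] [Fact l2.Prime] (h : l1.Coprime l2)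
    (hl1m : l1 % 4 = 3) (hl2m : l2 % 4 = 1) :
    ‖DirichletCharacter.LFunction (psiC l1 l2 h) 1‖ = π / ((l1*l2:ℕ) * √((l1*l2:ℕ):ℝ)) * 
      |((∑ k : ZMod (l1*l2), psiZ l1 l2 h k * (k.val : ℤ) : ℤ) : ℝ)| := by
  have hm : 0 < l1 * l2 := Nat.pos_of_ne_zero (NeZero.ne _)
  have hm' : (0:ℝ) < (l1*l2:ℕ) := by exact_mod_cast hm
  have hg : ‖psiG l1 l2 h‖ = √((l1*l2:ℕ):ℝ) := by
    have := congrArg norm (psiG_sq l1 l2 h hl1m hl2m)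
    rw [norm_pow, norm_neg, Complex.norm_natCast] at this
    rw [← this, Real.sqrt_sq (norm_nonneg _)]
  have hf := congrArg norm (C_fin l1 l2 h hl1m hl2m)
  rw [norm_mul, norm_mul, hg] at hf
  have hB : (∑ k : ZMod (l1*l2), psiC l1 l2 h k * (k.val : ℂ)) = ((∑ k : ZMod (l1*l2), psiZ l1 l2 h k * (k.val : ℤ) : ℤ) : ℂ) := by
    push_cast; rfl
  rw [hB, Complex.norm_intCast] at hf
  rw [C_L1 l1 l2 h hl1m hl2m, norm_mul]
  have n1 : ‖(-((l1*l2:ℕ):ℂ) * Complex.I / 2)‖ = (l1*l2:ℕ)/2 := by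
    rw [norm_div, norm_mul, norm_neg, Complex.norm_natCast, Complex.norm_I]; simp
  have n2 : ‖(π / (2 * ((l1*l2:ℕ):ℂ)) : ℂ)‖ = π / (2 * (l1*l2:ℕ)) := by
    rw [norm_div, norm_mul, Complex.norm_natCast, Complex.norm_real, Real.norm_of_nonneg pi_pos.le]; simp
  rw [n1] at hf
  rw [n2]
  set X := ‖∑ j : ZMod (l1*l2), psiC l1 l2 h j * Complex.cot (π * ((j.val / (l1*l2:ℕ) : ℝ) : ℂ))‖
  set Y := |((∑ k : ZMod (l1*l2), psiZ l1 l2 h k * (k.val : ℤ) : ℤ) : ℝ)|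
  set M : ℝ := ((l1*l2:ℕ):ℝ)
  have hsq : √M * √M = M := Real.mul_self_sqrt hm'.le
  have hs0 : 0 < √M := Real.sqrt_pos.2 hm'
  have hX : X = 2 * √M * Y / M := by field_simp; linarith
  rw [hX]
  field_simp
  rw [Real.sq_sqrt hm'.le]

open Filter Topology in
lemma D_resid (K : Type*) [Field K] [NumberField K] {M : ℕ} [NeZero M] (χ : DirichletCharacter ℂ M)
    (hχ : χ ≠ 1)
    (hle : ∀ n : ℕ, n ≠ 0 → ‖χ.zetaMul n‖ ≤ (Nat.card {I : Ideal (NumberField.RingOfIntegers K) // Ideal.absNorm I = n} : ℝ)) :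
    ‖χ.LFunction 1‖ ≤ NumberField.dedekindZeta_residue K := by
  set a : ℕ → ℂ := fun n => (Nat.card {I : Ideal (NumberField.RingOfIntegers K) // Ideal.absNorm I = n} : ℂ) with ha
  have hK := NumberField.tendsto_sub_one_mul_dedekindZeta_nhdsGT K
  have hL : Tendsto (fun s : ℝ => ((s:ℂ) - 1) * riemannZeta s * χ.LFunction s) (𝓝[>] 1) (𝓝 (1 * χ.LFunction 1)) := by
    apply Tendsto.mul
    · have := riemannZeta_residue_one
      refine this.comp ?_
      refine tendsto_nhdsWithin_iff.2 ⟨?_, ?_⟩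
      · have : Tendsto (fun s : ℝ => (s:ℂ)) (𝓝 1) (𝓝 ((1:ℝ):ℂ)) := Complex.continuous_ofReal.continuousAt
        rw [Complex.ofReal_one] at this
        exact this.mono_left nhdsWithin_le_nhds
      · filter_upwards [self_mem_nhdsWithin] with s hs
        have : s ≠ 1 := ne_of_gt hs
        simpa using this
    · have hc : Continuous (fun s : ℝ => χ.LFunction (s:ℂ)) :=
        (DirichletCharacter.differentiable_LFunction hχ).continuous.comp Complex.continuous_ofReal
      have := hc.tendsto 1
      rw [Complex.ofReal_one] at this
      exact this.mono_left nhdsWithin_le_nhds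
  rw [one_mul] at hL
  have hpos := NumberField.dedekindZeta_residue_pos K
  have hne : ∀ᶠ s : ℝ in 𝓝[>] 1, ((s:ℂ)-1) * NumberField.dedekindZeta K s ≠ 0 :=
    hK.eventually_ne (by exact_mod_cast hpos.ne')
  have hfin := le_of_tendsto_of_tendsto hL.norm hK.norm ?_
  · rwa [Complex.norm_real, Real.norm_of_nonneg hpos.le] at hfin
  filter_upwards [hne, self_mem_nhdsWithin] with s hs hs1
  have hs1' : (1:ℝ) < s := hs1
  have hz : NumberField.dedekindZeta K s ≠ 0 := right_ne_zero_of_mul hs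
  have hsum : LSeriesSummable a s := by
    by_contra hn
    exact hz (tsum_eq_zero_of_not_summable hn)
  have hre : 1 < (s:ℂ).re := by simpa using hs1'
  have hprod : riemannZeta s * χ.LFunction s = LSeries χ.zetaMul s := by
    rw [DirichletCharacter.zetaMul, ← ArithmeticFunction.coe_mul, LSeries_convolution']
    · rw [χ.LFunction_eq_LSeries hre]
      congr 1
      · simp_rw [← ArithmeticFunction.LSeries_zeta_eq_riemannZeta hre, ← ArithmeticFunction.natCoe_apply]
      · exact LSeries_congr χ.apply_eq_toArithmeticFunction_apply s
    · exact ArithmeticFunction.LSeriesSummable_zeta_iff.mpr hre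
    · exact (LSeriesSummable_congr _ fun h ↦ (χ.apply_eq_toArithmeticFunction_apply h).symm).mpr <|
        ZMod.LSeriesSummable_of_one_lt_re χ hre
  rw [mul_assoc, hprod, norm_mul, norm_mul]
  gcongr
  have hn := hsum.norm
  have hterm : ∀ n, LSeries.term a s n = (‖LSeries.term a s n‖ : ℂ) := by
    intro n
    rcases eq_or_ne n 0 with rfl | h0
    · simp
    rw [LSeries.term_of_ne_zero h0, norm_div, Complex.norm_natCast_cpow_of_pos (Nat.pos_of_ne_zero h0)]
    simp only [ha, Complex.norm_natCast, Complex.ofReal_re]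
    rw [Complex.ofReal_div, Complex.ofReal_cpow (by positivity)]
    simp
  have hKz : NumberField.dedekindZeta K s = ((∑' n, ‖LSeries.term a s n‖ : ℝ) : ℂ) := by
    rw [Complex.ofReal_tsum]
    exact tsum_congr hterm
  rw [hKz, Complex.norm_real]
  refine le_trans ?_ (le_abs_self _)
  have hzs := χ.LSeriesSummable_zetaMul hre
  refine (norm_tsum_le_tsum_norm hzs.norm).trans ?_
  refine hzs.norm.tsum_le_tsum (fun n => ?_) hn
  apply LSeries.norm_term_le
  rcases eq_or_ne n 0 with rfl | h0
  · simp
  · refine (hle n h0).trans ?_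
    simp [ha]

section
variable (K : Type*) [Field K] [NumberField K]

lemma E_ratint {x : ℚ} (h : IsIntegral ℤ ((x : ℚ) : ℂ)) : ∃ n : ℤ, x = n := by
  have h2 : IsIntegral ℤ x := by
    have : ((x : ℚ) : ℂ) = algebraMap ℚ ℂ x := by simp
    rw [this] at h
    exact (isIntegral_algebraMap_iff (algebraMap ℚ ℂ).injective).1 h
  obtain ⟨n, hn⟩ := IsIntegrallyClosed.isIntegral_iff.1 h2
  exact ⟨n, by rw [← hn]; simp⟩

lemma E_sqfree {m : ℕ} (hm : Squarefree m) {t : ℚ} {c : ℤ} (h : (m:ℚ) * t^2 = c) : ∃ n : ℤ, t = n := by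
  have hd : (t.den:ℚ) ≠ 0 := by exact_mod_cast t.den_nz
  have h1 : (m:ℤ) * t.num^2 = c * (t.den:ℤ)^2 := by
    have : (m:ℚ) * (t.num:ℚ)^2 = c * (t.den:ℚ)^2 := by
      rw [← h]
      conv_rhs => rw [← Rat.num_div_den t]
      simp only [Rat.num_div_den]
      rw [mul_assoc, ← mul_pow, Rat.mul_den_eq_num]
    exact_mod_cast this
  have h2 : (t.den:ℤ)^2 ∣ (m:ℤ) * t.num^2 := ⟨c, by rw [h1]; ring⟩
  have hco : IsCoprime ((t.den:ℤ)^2) (t.num^2) := by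
    apply IsCoprime.pow
    rw [Int.isCoprime_iff_gcd_eq_one]
    have := t.reduced
    rw [Int.gcd, Int.natAbs_natCast]; exact this.symm
  have h3 := hco.dvd_of_dvd_mul_right h2
  have h4 : t.den * t.den ∣ m := by
    rw [← sq]; exact_mod_cast h3
  have h5 := Nat.isUnit_iff.1 (hm _ h4)
  exact ⟨t.num, ((Rat.den_eq_one_iff t).1 h5).symm⟩

def E_c (m : ℕ) : ℤ := (1 + m) / 4

lemma E_c_eq {m : ℕ} (h : m % 4 = 3) : (m:ℤ) = 4 * E_c m - 1 := by
  unfold E_c; omega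

/-- data of imaginary quadratic field -/
structure IQ (m : ℕ) (s : K) : Prop where
  hs : s ^ 2 = -(m:K)
  hspan : ∀ x : K, ∃ a b : ℚ, x = a + b * s
  hm4 : m % 4 = 3
  hsq : Squarefree m

variable {K} {m : ℕ} {s : K}

lemma IQ.conj (H : IQ K m s) (φ : K →+* ℂ) : (starRingEnd ℂ) (φ s) = - φ s := by
  have h1 : (φ s)^2 = -(m:ℂ) := by rw [← map_pow, H.hs]; simp
  have hm : 0 < (m:ℝ) := by have := H.hm4; have : 0 < m := by omega
                            exact_mod_cast this
  have h2 := congrArg Complex.re h1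
  have h3 := congrArg Complex.im h1
  simp [sq] at h2 h3
  have : (φ s).re = 0 := by
    by_contra h0
    have : (φ s).im = 0 := by
      rcases mul_eq_zero.1 (show (φ s).re * (φ s).im = 0 by linarith) with h | h
      · exact absurd h h0
      · exact h
    rw [this] at h2; nlinarith [mul_self_nonneg (φ s).re]
  apply Complex.ext <;> simp [this]

lemma IQ.int_form (H : IQ K m s) {x : K} (hx : IsIntegral ℤ x) : ∃ u v : ℤ, x = u + v * ((1+s)/2) := by
  obtain ⟨a, b, hab⟩ := H.hspan x
  obtain ⟨φ⟩ : Nonempty (K →+* ℂ) := inferInstance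
  have hc := H.conj φ
  have hφ : IsIntegral ℤ (φ x) := hx.map (φ.toIntAlgHom)
  have hφ' : IsIntegral ℤ ((starRingEnd ℂ) (φ x)) := hφ.map ((starRingEnd ℂ).toIntAlgHom)
  have e1 : φ x = a + b * φ s := by rw [hab]; simp
  have e2 : (starRingEnd ℂ) (φ x) = a - b * φ s := by
    rw [e1, map_add, map_mul, hc]; simp [sub_eq_add_neg]
  have hφs : (φ s)^2 = -(m:ℂ) := by rw [← map_pow, H.hs]; simp
  have i1 : IsIntegral ℤ (((2*a : ℚ)) : ℂ) := by
    have := hφ.add hφ'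
    rw [e2, e1] at this
    rw [show (((2*a : ℚ)) : ℂ) = a + b * φ s + (a - b * φ s) by push_cast; ring]; exact this
  have i2 : IsIntegral ℤ (((a^2+m*b^2 : ℚ)) : ℂ) := by
    have := hφ.mul hφ'
    rw [e2, e1] at this
    rw [show (((a^2+m*b^2 : ℚ)) : ℂ) = (a + b * φ s) * (a - b * φ s) by push_cast; linear_combination (b^2:ℂ) * hφs]; exact this
  obtain ⟨A, hA⟩ := E_ratint i1
  obtain ⟨C, hC⟩ := E_ratint i2
  obtain ⟨B, hB⟩ := E_sqfree H.hsq (t := 2*b) (c := 4*C-A^2) (by push_cast; rw [← hA, ← hC]; ring)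
  have hq : A^2 + m * B^2 = 4*C := by
    have : (A:ℚ)^2 + m * (B:ℚ)^2 = 4*C := by rw [← hA, ← hC, ← hB]; ring
    exact_mod_cast this
  have hpar : ∃ k, A - B = 2 * k := by
    have h1 : (m:ℤ) % 4 = 3 := by have := H.hm4; omega
    have hmm : (m:ℤ) = 4 * (m/4) + 3 := by omega
    rw [hmm] at hq
    set w := (m:ℤ)/4
    have : (2:ℤ) ∣ (A - B) := by
      have h2 : (2:ℤ) ∣ (A-B)^2 := ⟨2*C - 2*w*B^2-B^2-A*B, by linear_combination hq⟩
      exact Int.prime_two.dvd_of_dvd_pow h2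
    exact this
  obtain ⟨k, hk⟩ := hpar
  refine ⟨k, B, ?_⟩
  have ha : (a:K) = (A:K)/2 := by
    have : a = (A:ℚ)/2 := by rw [← hA]; ring
    rw [this]; push_cast; ring
  have hb : (b:K) = (B:K)/2 := by
    have : b = (B:ℚ)/2 := by rw [← hB]; ring
    rw [this]; push_cast; ring
  have hk' : (A:K) = B + 2 * k := by
    have : A = B + 2*k := by linarith
    rw [this]; push_cast; ring
  rw [hab, ha, hb, hk']; ring


lemma IQ.theta_int (H : IQ K m s) : IsIntegral ℤ ((1+s)/2 : K) := by
  refine ⟨Polynomial.X^2 - Polynomial.X + Polynomial.C (E_c m), ?_, ?_⟩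
  · rw [show (Polynomial.X^2 - Polynomial.X + Polynomial.C (E_c m)) = Polynomial.X^2 + (- Polynomial.X + Polynomial.C (E_c m)) by ring]
    apply Polynomial.monic_X_pow_add
    refine lt_of_le_of_lt (b := ((1:ℕ) : WithBot ℕ)) ?_ (by norm_num)
    compute_degree
    norm_num
  · have hm : (m:K) = 4 * (E_c m : K) - 1 := by
      have := congrArg (Int.cast : ℤ → K) (E_c_eq H.hm4)
      push_cast at this; exact this
    have := H.hs
    rw [Polynomial.eval₂_add, Polynomial.eval₂_C]
    simp
    rw [hm] at this
    linear_combination (1/4:K) * this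

noncomputable def IQ.theta (H : IQ K m s) : NumberField.RingOfIntegers K := ⟨(1+s)/2, H.theta_int⟩

lemma IQ.theta_sq (H : IQ K m s) : H.theta * H.theta = (-(E_c m)) • 1 + (1:ℤ) • H.theta := by
  apply NumberField.RingOfIntegers.ext
  have hm : (m:K) = 4 * (E_c m : K) - 1 := by
    have := congrArg (Int.cast : ℤ → K) (E_c_eq H.hm4)
    push_cast at this; exact this
  have := H.hs
  have ht : (algebraMap (NumberField.RingOfIntegers K) K) H.theta = (1+s)/2 := rfl
  rw [one_smul]
  change (algebraMap (NumberField.RingOfIntegers K) K) _ = (algebraMap (NumberField.RingOfIntegers K) K) _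
  rw [map_mul, map_add, ht]
  simp
  rw [hm] at this
  linear_combination (1/4:K) * this

lemma IQ.indep (H : IQ K m s) {u v : ℤ} (h : (u:K) + v * ((1+s)/2) = 0) : u = 0 ∧ v = 0 := by
  obtain ⟨φ⟩ : Nonempty (K →+* ℂ) := inferInstance
  have hc := H.conj φ
  have h2 : φ 2 = 2 := map_ofNat φ 2
  have h2' : (starRingEnd ℂ) 2 = 2 := map_ofNat _ 2
  have e := congrArg φ h
  simp [h2] at e
  have e' := congrArg (starRingEnd ℂ) e
  simp [hc, h2'] at e'
  have hs0 : φ s ≠ 0 := by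
    intro h0
    have h1 : (φ s)^2 = -(m:ℂ) := by rw [← map_pow, H.hs]; simp
    rw [h0] at h1
    have h2 := H.hm4
    have : m ≠ 0 := by omega
    have : (m:ℂ) ≠ 0 := by exact_mod_cast this
    simp at h1; simp_all
  have : (v:ℂ) * φ s = 0 := by linear_combination e - e'
  have hv : v = 0 := by
    have := (mul_eq_zero.1 this).resolve_right hs0
    exact_mod_cast this
  subst hv
  simp at h
  exact ⟨h, rfl⟩

noncomputable def IQ.eqv (H : IQ K m s) : QuadraticAlgebra ℤ (-(E_c m)) 1 ≃ₐ[ℤ] NumberField.RingOfIntegers K :=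
  AlgEquiv.ofBijective (QuadraticAlgebra.lift ⟨H.theta, H.theta_sq⟩) (by
    constructor
    · rw [injective_iff_map_eq_zero]
      intro z hz
      have := congrArg (algebraMap (NumberField.RingOfIntegers K) K) hz
      simp [QuadraticAlgebra.lift, IQ.theta] at this
      have := H.indep this
      ext <;> simp [this]
    · intro x
      obtain ⟨u, v, h⟩ := H.int_form x.2
      refine ⟨⟨u, v⟩, ?_⟩
      apply NumberField.RingOfIntegers.ext
      simp [QuadraticAlgebra.lift, IQ.theta]
      exact h.symm)

lemma IQ.eqv_apply (H : IQ K m s) (z) : H.eqv z = z.re • 1 + z.im • H.theta := rfl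

lemma E_trace (c : ℤ) (z : QuadraticAlgebra ℤ c 1) : Algebra.trace ℤ _ z = 2 * z.re + z.im := by
  rw [Algebra.trace_eq_matrix_trace (QuadraticAlgebra.basis c 1), Matrix.trace_fin_two,
    Algebra.leftMulMatrix_eq_repr_mul, Algebra.leftMulMatrix_eq_repr_mul]
  simp [QuadraticAlgebra.basis, Module.Basis.ofEquivFun]
  ring

lemma IQ.discr (H : IQ K m s) : NumberField.discr K = -(m:ℤ) := by
  rw [← NumberField.discr_eq_discr K ((QuadraticAlgebra.basis _ 1).map H.eqv.toLinearEquiv)]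
  have : (⇑((QuadraticAlgebra.basis (-(E_c m)) 1).map H.eqv.toLinearEquiv)) = H.eqv ∘ (QuadraticAlgebra.basis (-(E_c m)) 1) := by
    ext; simp
  rw [this, ← Algebra.discr_eq_discr_of_algEquiv, Algebra.discr_def, Matrix.det_fin_two]
  simp [Algebra.traceMatrix_apply, Algebra.traceForm_apply, E_trace, QuadraticAlgebra.basis, Module.Basis.ofEquivFun]
  have := E_c_eq H.hm4
  omega

lemma IQ.finrank (H : IQ K m s) : Module.finrank ℚ K = 2 := by
  rw [← NumberField.RingOfIntegers.rank, Module.finrank_eq_card_basis ((QuadraticAlgebra.basis _ 1).map H.eqv.toLinearEquiv)]; simp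

lemma IQ.hom (H : IQ K m s) {p : ℕ} (r : ZMod p) (hr : r * r - r + (E_c m : ZMod p) = 0) :
    ∃ ρ : NumberField.RingOfIntegers K →+* ZMod p, ρ H.theta = r := by
  let g : QuadraticAlgebra ℤ (-(E_c m)) 1 →ₐ[ℤ] ZMod p := QuadraticAlgebra.lift ⟨r, by simp; linear_combination hr⟩
  refine ⟨g.toRingHom.comp H.eqv.symm.toRingEquiv.toRingHom, ?_⟩
  have : H.eqv.symm H.theta = ⟨0, 1⟩ := by
    rw [AlgEquiv.symm_apply_eq, IQ.eqv_apply]; simp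
  simp [this, g, QuadraticAlgebra.lift]

lemma E_norm_ker {R : Type*} [CommRing R] [IsDedekindDomain R] [Module.Free ℤ R] [Module.Finite ℤ R] {p : ℕ} [Fact p.Prime] (ρ : R →+* ZMod p) : Ideal.absNorm (RingHom.ker ρ) = p := by
  have hs : Function.Surjective ρ := ZMod.ringHom_surjective ρ
  rw [Ideal.absNorm_apply, Submodule.cardQuot_apply]
  have := Nat.card_congr (RingHom.quotientKerEquivOfSurjective hs).toEquiv
  rw [Nat.card_zmod] at this
  exact this

end

lemma F_leg (l1 l2 p : ℕ) [Fact l1.Prime] [Fact l2.Prime] [Fact p.Prime] (h : l1.Coprime l2)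
    (hl1m : l1 % 4 = 3) (hl2m : l2 % 4 = 1) (hp2 : p ≠ 2) :
    psiZ l1 l2 h p = legendreSym p (-((l1*l2:ℕ):ℤ)) := by
  have e1 : quadraticChar (ZMod l1) p = legendreSym l1 p := by simp [legendreSym]
  have e2 : quadraticChar (ZMod l2) p = legendreSym l2 p := by simp [legendreSym]
  have h12 : l1 ≠ 2 := by rintro rfl; norm_num at hl1m
  have h22 : l2 ≠ 2 := by rintro rfl; norm_num at hl2m
  rw [psiZ_nat, e1, e2, show (-((l1*l2:ℕ):ℤ)) = (-1) * l1 * l2 by push_cast; ring, legendreSym.mul, legendreSym.mul,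
    legendreSym.at_neg_one hp2, legendreSym.quadratic_reciprocity_one_mod_four hl2m hp2]
  congr 1
  rcases (Nat.Prime.eq_two_or_odd (Fact.out : p.Prime)) with h0 | h0
  · exact absurd h0 hp2
  have : p % 4 = 1 ∨ p % 4 = 3 := by omega
  rcases this with h4 | h4
  · rw [ZMod.χ₄_nat_one_mod_four h4, legendreSym.quadratic_reciprocity_one_mod_four h4 h12]; simp
  · rw [ZMod.χ₄_nat_three_mod_four h4, legendreSym.quadratic_reciprocity_three_mod_four h4 hl1m]; simp

lemma F_root (l1 l2 p : ℕ) [Fact l1.Prime] [Fact l2.Prime] [Fact p.Prime] (h : l1.Coprime l2)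
    (hl1m : l1 % 4 = 3) (hl2m : l2 % 4 = 1) (hps : psiZ l1 l2 h p ≠ -1) :
    ∃ r : ZMod p, r * r - r + (E_c (l1*l2) : ZMod p) = 0 := by
  have hm4 : (l1*l2) % 4 = 3 := by rw [Nat.mul_mod, hl1m, hl2m]
  have hc := E_c_eq hm4
  by_cases hp2 : p = 2
  · subst hp2
    refine ⟨0, ?_⟩
    have h12 : l1 ≠ 2 := by rintro rfl; norm_num at hl1m
    have h22 : l2 ≠ 2 := by rintro rfl; norm_num at hl2m
    have e1 : quadraticChar (ZMod l1) (2:ℕ) = legendreSym l1 2 := by simp [legendreSym]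
    have e2 : quadraticChar (ZMod l2) (2:ℕ) = legendreSym l2 2 := by simp [legendreSym]
    rw [psiZ_nat, e1, e2, legendreSym.at_two h12, legendreSym.at_two h22, ← map_mul, ← Nat.cast_mul, ZMod.χ₈_nat_eq_if_mod_eight] at hps
    have h8 : (l1*l2) % 8 = 7 := by
      split_ifs at hps <;> omega
    have : (2:ℤ) ∣ E_c (l1*l2) := by unfold E_c; omega
    have := (ZMod.intCast_zmod_eq_zero_iff_dvd (E_c (l1*l2)) 2).2 (by exact_mod_cast this)
    rw [this]; ring
  · rw [F_leg l1 l2 p h hl1m hl2m hp2] at hps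
    have hsq : ∃ t : ZMod p, t * t = -(l1*l2:ℕ) := by
      by_cases h0 : ((-((l1*l2:ℕ):ℤ) : ℤ) : ZMod p) = 0
      · refine ⟨0, ?_⟩
        rw [mul_zero]; push_cast at h0 ⊢; exact h0.symm
      · rcases legendreSym.eq_one_or_neg_one p h0 with h1 | h1
        · rw [legendreSym.eq_one_iff p h0] at h1
          obtain ⟨t, ht⟩ := h1
          exact ⟨t, by rw [← ht]; push_cast; ring⟩
        · exact absurd h1 hps
    obtain ⟨t, ht⟩ := hsq
    have h2 : (2 : ZMod p) ≠ 0 := by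
      intro h0
      have : ((2:ℕ) : ZMod p) = 0 := by exact_mod_cast h0
      rw [ZMod.natCast_eq_zero_iff] at this
      exact hp2 ((Nat.prime_dvd_prime_iff_eq Fact.out Nat.prime_two).1 this)
    refine ⟨(1+t)/2, ?_⟩
    have hc' := congrArg (Int.cast : ℤ → ZMod p) hc
    rw [Int.cast_natCast] at hc'
    rw [hc'] at ht
    push_cast at ht
    field_simp
    linear_combination ht

section
variable {K : Type*} [Field K] [NumberField K] {m : ℕ} {s : K}
open NumberField

lemma IQ.residue (H : IQ K m s) : dedekindZeta_residue K ≤ Real.pi * classNumber K / √(m:ℝ) := by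
  have hm : 0 < (m:ℝ) := by have := H.hm4; have : 0 < m := by omega
                            exact_mod_cast this
  have hr : InfinitePlace.nrRealPlaces K = 0 := by
    rw [nrRealPlaces_eq_zero_iff]
    refine ⟨fun v => ?_⟩
    by_contra hv
    rw [InfinitePlace.not_isComplex_iff_isReal] at hv
    obtain ⟨φ, hφ, rfl⟩ := hv
    have := H.conj φ
    have h2 : (starRingEnd ℂ) (φ s) = φ s := DFunLike.congr_fun (ComplexEmbedding.isReal_iff.1 hφ) s
    have h3 : φ s = 0 := by
      have : 2 * φ s = 0 := by linear_combination this - h2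
      simpa using this
    have h1 : (φ s)^2 = -(m:ℂ) := by rw [← map_pow, H.hs]; simp
    rw [h3] at h1
    have : (m:ℂ) ≠ 0 := by exact_mod_cast hm.ne'
    simp at h1; simp_all
  have hcx : InfinitePlace.nrComplexPlaces K = 1 := by
    have := InfinitePlace.card_add_two_mul_card_eq_rank K
    rw [hr, H.finrank] at this; omega
  have hcard : Fintype.card (InfinitePlace K) = 1 := by
    rw [InfinitePlace.card_eq_nrRealPlaces_add_nrComplexPlaces, hr, hcx]
  have hreg : Units.regulator K = 1 := by
    classical
    rw [Units.regulator_eq_det']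
    have : IsEmpty {w : InfinitePlace K // w ≠ Units.dirichletUnitTheorem.w₀} := by
      have := (Fintype.card_le_one_iff_subsingleton.1 hcard.le)
      exact ⟨fun w => w.2 (Subsingleton.elim _ _)⟩
    rw [Matrix.det_isEmpty, abs_one]
  have hw : (2:ℝ) ≤ Units.torsionOrder K := by
    have h1 := Units.even_torsionOrder K
    have h2 := Units.torsionOrder_pos K
    have : 2 ≤ Units.torsionOrder K := by
      obtain ⟨k, hk⟩ := h1; omega
    exact_mod_cast this
  rw [dedekindZeta_residue_def, hr, hcx, hreg, H.discr]
  have hd : |((-(m:ℤ) : ℤ) : ℝ)| = m := by simp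
  rw [hd]
  have hs : 0 < √(m:ℝ) := Real.sqrt_pos.2 hm
  rw [div_le_div_iff₀ (by positivity) hs]
  have hX : 0 ≤ Real.pi * (classNumber K:ℝ) * √(m:ℝ) := by positivity
  nlinarith

lemma IQ.two_theta (H : IQ K m s) : algebraMap (𝓞 K) K (2 * H.theta - 1) = s := by
  have ht : algebraMap (𝓞 K) K H.theta = (1+s)/2 := rfl
  rw [map_sub, map_mul, ht, map_ofNat (algebraMap (𝓞 K) K) 2, map_one]; ring


instance F_fin (n : ℕ) [NeZero n] : Finite {I : Ideal (𝓞 K) // Ideal.absNorm I = n} := by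
  have := Ideal.finite_setOfPred_absNorm_eq (S := 𝓞 K) n
  exact this

lemma F_coprime {a b : ℕ} (ha : a ≠ 0) (hb : b ≠ 0) (hab : a.Coprime b) :
    Nat.card {I : Ideal (𝓞 K) // Ideal.absNorm I = a} * Nat.card {I : Ideal (𝓞 K) // Ideal.absNorm I = b}
      ≤ Nat.card {I : Ideal (𝓞 K) // Ideal.absNorm I = a * b} := by
  have : NeZero (a*b) := ⟨mul_ne_zero ha hb⟩
  rw [← Nat.card_prod]
  have hcop : ∀ I J : Ideal (𝓞 K), Ideal.absNorm I = a → Ideal.absNorm J = b → IsCoprime I J := by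
    intro I J hI hJ
    rw [Ideal.isCoprime_iff_add, Submodule.add_eq_sup, Ideal.one_eq_top, Ideal.eq_top_iff_one]
    have h1 := Ideal.absNorm_mem I
    have h2 := Ideal.absNorm_mem J
    rw [hI] at h1; rw [hJ] at h2
    have hg := Nat.gcd_eq_gcd_ab a b
    rw [hab] at hg
    have : (1 : 𝓞 K) = (a : 𝓞 K) * (a.gcdA b : 𝓞 K) + (b : 𝓞 K) * (a.gcdB b : 𝓞 K) := by
      have := congrArg (Int.cast : ℤ → 𝓞 K) hg
      push_cast at this; simpa using this
    rw [this]
    exact Submodule.add_mem_sup (Ideal.mul_mem_right _ _ h1) (Ideal.mul_mem_right _ _ h2)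
  refine Nat.card_le_card_of_injective (fun x => ⟨x.1.1 * x.2.1, by rw [map_mul, x.1.2, x.2.2]⟩) ?_
  rintro ⟨⟨I, hI⟩, ⟨J, hJ⟩⟩ ⟨⟨I', hI'⟩, ⟨J', hJ'⟩⟩ h
  simp only [Subtype.mk.injEq] at h
  have e1 : I = I' := by
    apply dvd_antisymm
    · exact (hcop I J' hI hJ').dvd_of_dvd_mul_right (h ▸ dvd_mul_right I J)
    · exact (hcop I' J hI' hJ).dvd_of_dvd_mul_right (h.symm ▸ dvd_mul_right I' J')
  have e2 : J = J' := by
    apply dvd_antisymm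
    · exact (hcop I' J hI' hJ).symm.dvd_of_dvd_mul_left (h ▸ dvd_mul_left J I)
    · exact (hcop I J' hI hJ').symm.dvd_of_dvd_mul_left (h.symm ▸ dvd_mul_left J' I')
  subst e1; subst e2; rfl

lemma F_pos {n : ℕ} (hn : n ≠ 0) (I : Ideal (𝓞 K)) (hI : Ideal.absNorm I = n) :
    1 ≤ Nat.card {I : Ideal (𝓞 K) // Ideal.absNorm I = n} := by
  have : NeZero n := ⟨hn⟩
  have : Nonempty {I : Ideal (𝓞 K) // Ideal.absNorm I = n} := ⟨⟨I, hI⟩⟩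
  exact Nat.card_pos

lemma F_split {p : ℕ} (hp : p.Prime) (k : ℕ) (P Q : Ideal (𝓞 K)) (hP : Ideal.absNorm P = p) (hQ : Ideal.absNorm Q = p)
    (hPp : P.IsPrime) (hQp : Q.IsPrime) (hne : P ≠ Q) :
    k + 1 ≤ Nat.card {I : Ideal (𝓞 K) // Ideal.absNorm I = p ^ k} := by
  have : NeZero (p^k) := ⟨pow_ne_zero _ hp.ne_zero⟩
  have hP0 : P ≠ ⊥ := by rintro rfl; simp at hP; exact hp.ne_zero hP.symm
  have hQ0 : Q ≠ ⊥ := by rintro rfl; simp at hQ; exact hp.ne_zero hQ.symm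
  have key : ∀ i j : ℕ, i < j → j ≤ k → P^i * Q^(k-i) ≠ P^j * Q^(k-j) := by
    intro i j hij hjk h
    have hj : P^j = P^i * P^(j-i) := by rw [← pow_add]; congr 1; omega
    rw [hj, mul_assoc] at h
    have h2 := mul_left_cancel₀ (pow_ne_zero i hP0) h
    have h3 : P ∣ Q^(k-i) := by
      rw [h2]
      exact (dvd_pow_self P (by omega)).mul_right _
    have h4 := (Ideal.prime_of_isPrime hP0 hPp).dvd_of_dvd_pow h3
    have h5 : Q ≤ P := Ideal.dvd_iff_le.1 h4
    have := (hQp.isMaximal hQ0).eq_of_le hPp.ne_top h5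
    exact hne this.symm
  have := Nat.card_le_card_of_injective (fun i : Fin (k+1) => (⟨P^(i:ℕ) * Q^(k-i), by
    rw [map_mul, map_pow, map_pow, hP, hQ, ← pow_add]; congr 1; have := i.2; omega⟩ : {I : Ideal (𝓞 K) // Ideal.absNorm I = p ^ k})) ?_
  · rwa [Nat.card_fin] at this
  · intro i j h
    simp only [Subtype.mk.injEq] at h
    by_contra hne
    have hne' : (i:ℕ) ≠ j := fun h => hne (Fin.ext h)
    rcases lt_or_gt_of_ne hne' with hlt | hlt
    · exact key i j hlt (by have := j.2; omega) h
    · exact key j i hlt (by have := i.2; omega) h.symm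

lemma F_absNorm_nat (H : IQ K m s) (n : ℕ) : Ideal.absNorm (Ideal.span {(n : 𝓞 K)}) = n^2 := by
  rw [Ideal.absNorm_span_singleton, show (n : 𝓞 K) = algebraMap ℤ (𝓞 K) n by simp, Algebra.norm_algebraMap, RingOfIntegers.rank, H.finrank]
  simp

lemma F_count {l1 l2 : ℕ} [Fact l1.Prime] [Fact l2.Prime] (h : l1.Coprime l2)
    (hl1m : l1 % 4 = 3) (hl2m : l2 % 4 = 1) (H : IQ K (l1*l2) s) (n : ℕ) (hn : n ≠ 0) :
    ‖(psiC l1 l2 h).zetaMul n‖ ≤ (Nat.card {I : Ideal (𝓞 K) // Ideal.absNorm I = n} : ℝ) := by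
  induction n using Nat.recOnPosPrimePosCoprime with
  | zero => exact absurd rfl hn
  | one =>
    rw [(psiC l1 l2 h).isMultiplicative_zetaMul.map_one, norm_one]
    exact_mod_cast F_pos one_ne_zero (⊤ : Ideal (𝓞 K)) (by simp)
  | coprime a b ha hb hab iha ihb =>
    rw [(psiC l1 l2 h).isMultiplicative_zetaMul.map_mul_of_coprime hab, norm_mul]
    refine (mul_le_mul (iha (by omega)) (ihb (by omega)) (norm_nonneg _) (by positivity)).trans ?_
    exact_mod_cast F_coprime (by omega) (by omega) hab
  | prime_pow p k hp hk =>
    have : Fact p.Prime := ⟨hp⟩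
    have hz : (psiC l1 l2 h).zetaMul (p^k) = ((∑ i ∈ Finset.range (k+1), (psiZ l1 l2 h p)^i : ℤ) : ℂ) := by
      rw [DirichletCharacter.zetaMul, ArithmeticFunction.coe_zeta_mul_apply, Nat.sum_divisors_prime_pow hp]
      push_cast
      refine Finset.sum_congr rfl fun i _ => ?_
      have hpi : p^i ≠ 0 := pow_ne_zero _ hp.ne_zero
      show (if p^i = 0 then (0:ℂ) else psiC l1 l2 h ((p^i : ℕ) : ZMod (l1*l2))) = _
      rw [if_neg hpi, psiC_apply, Nat.cast_pow, map_pow]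
      push_cast
      rfl
    rw [hz, Complex.norm_intCast]
    by_cases hps : psiZ l1 l2 h p = -1
    · rw [hps, neg_one_geom_sum]
      split_ifs with hev
      · simp
      · have hk2 : Even k := by rw [Nat.even_add_one, not_not] at hev; exact hev
        obtain ⟨j, hj⟩ := hk2
        simp only [Int.cast_one, abs_one]
        exact_mod_cast F_pos (pow_ne_zero k hp.ne_zero) (Ideal.span {(p : 𝓞 K)} ^ j) (by
          rw [map_pow, F_absNorm_nat H, ← pow_mul]; congr 1; omega)
    · obtain ⟨r, hr⟩ := F_root l1 l2 p h hl1m hl2m hps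
      obtain ⟨ρ, hρ⟩ := H.hom r hr
      by_cases h0 : psiZ l1 l2 h p = 0
      · rw [h0]
        have : ∑ i ∈ Finset.range (k+1), (0:ℤ)^i = 1 := by
          rw [Finset.sum_range_succ']; simp
        rw [this]
        simp only [Int.cast_one, abs_one]
        exact_mod_cast F_pos (pow_ne_zero k hp.ne_zero) (RingHom.ker ρ ^ k) (by
          rw [map_pow, E_norm_ker])
      · have h1 : psiZ l1 l2 h p = 1 := by
          have hq : ∀ (l : ℕ) [Fact l.Prime] (x : ZMod l), quadraticChar (ZMod l) x = 0 ∨ quadraticChar (ZMod l) x = 1 ∨ quadraticChar (ZMod l) x = -1 := fun l _ x => quadraticChar_isQuadratic _ x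
          rw [psiZ_nat] at *
          rcases hq l1 p with e | e | e <;> rcases hq l2 p with e' | e' | e' <;> simp_all
        rw [h1]
        have hlp : ((l1*l2 : ℕ) : ZMod p) ≠ 0 := by
          intro h00
          rw [ZMod.natCast_eq_zero_iff, hp.dvd_mul] at h00
          apply h0
          rw [psiZ_nat]
          rcases h00 with h00 | h00
          · rw [Nat.prime_dvd_prime_iff_eq hp Fact.out] at h00
            subst h00; simp
          · rw [Nat.prime_dvd_prime_iff_eq hp Fact.out] at h00
            subst h00; simp
        have hc := congrArg (Int.cast : ℤ → ZMod p) (E_c_eq H.hm4)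
        rw [Int.cast_natCast] at hc
        push_cast at hc hlp
        obtain ⟨ρ', hρ'⟩ := H.hom (1 - r) (by linear_combination hr)
        have hne : RingHom.ker ρ ≠ RingHom.ker ρ' := by
          intro he
          have : H.theta - ((r.val : ℕ) : 𝓞 K) ∈ RingHom.ker ρ := by
            rw [RingHom.mem_ker, map_sub, hρ, map_natCast, ZMod.natCast_zmod_val, sub_self]
          rw [he, RingHom.mem_ker, map_sub, hρ', map_natCast, ZMod.natCast_zmod_val] at this
          apply hlp
          rw [hc]
          linear_combination 4 * hr + (1 - 2*r) * (-1) * this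
        have := F_split hp k (RingHom.ker ρ) (RingHom.ker ρ') (E_norm_ker ρ) (E_norm_ker ρ') (RingHom.ker_isPrime _) (RingHom.ker_isPrime _) hne
        simp
        exact_mod_cast this
end

section
open NumberField IntermediateField

lemma G_norm {K : Type*} [Field K] [NumberField K] {m : ℕ} {s : K} (H : IQ K m s) (x : 𝓞 K) :
    ∃ u v : ℤ, 4 * Algebra.norm ℤ x = (2*u+v)^2 + m * v^2 := by
  obtain ⟨z, rfl⟩ := H.eqv.surjective x
  refine ⟨z.re, z.im, ?_⟩
  rw [Algebra.norm_eq_of_algEquiv, Algebra.norm_eq_matrix_det (QuadraticAlgebra.basis (-E_c m) 1), Matrix.det_fin_two]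
  simp only [Algebra.leftMulMatrix_eq_repr_mul]
  simp [QuadraticAlgebra.basis, Module.Basis.ofEquivFun]
  rw [E_c_eq H.hm4]; ring

lemma G_even {K : Type*} [Field K] [NumberField K] {s : K} {l1 l2 : ℕ} [Fact l1.Prime] [Fact l2.Prime] (h : l1.Coprime l2)
    (hl1m : l1 % 4 = 3) (hl2m : l2 % 4 = 1) (H : IQ K (l1*l2) s) : Even (classNumber K) := by
  have hp1 : l1.Prime := Fact.out
  have hp2 : l2.Prime := Fact.out
  obtain ⟨r, hr⟩ := F_root l1 l2 l1 h hl1m hl2m (by rw [psiZ_nat]; simp)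
  obtain ⟨ρ, hρ⟩ := H.hom r hr
  have hc := congrArg (Int.cast : ℤ → ZMod l1) (E_c_eq H.hm4)
  rw [Int.cast_natCast] at hc
  push_cast at hc
  simp at hc
  have hr2 : 2 * r - 1 = 0 := by
    have : (2*r-1)^2 = 0 := by linear_combination 4 * hr + hc
    exact pow_eq_zero_iff (two_ne_zero) |>.1 this
  set P := RingHom.ker ρ with hP
  have hPn : Ideal.absNorm P = l1 := E_norm_ker ρ
  have hP0 : P ≠ ⊥ := by intro h0; rw [h0] at hPn; simp at hPn; exact hp1.ne_zero hPn.symm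
  have m1 : (l1 : 𝓞 K) ∈ P := by rw [hP, RingHom.mem_ker, map_natCast, ZMod.natCast_self]
  have m2 : (2 * H.theta - 1 : 𝓞 K) ∈ P := by
    rw [hP, RingHom.mem_ker, map_sub, map_mul, hρ, map_ofNat, map_one, hr2]
  have hsq : (2 * H.theta - 1 : 𝓞 K) * (2 * H.theta - 1) = -((l1*l2 : ℕ) : 𝓞 K) := by
    apply RingOfIntegers.ext
    change algebraMap (𝓞 K) K _ = algebraMap (𝓞 K) K _
    rw [map_mul, H.two_theta, ← sq, H.hs]; simp
  have hPP : (l1 : 𝓞 K) ∈ P * P := by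
    have a1 : (l1 : 𝓞 K) * l1 ∈ P * P := Ideal.mul_mem_mul m1 m1
    have a2 : (-((l1*l2 : ℕ) : 𝓞 K)) ∈ P * P := hsq ▸ Ideal.mul_mem_mul m2 m2
    have hg := Nat.gcd_eq_gcd_ab l1 l2
    rw [h] at hg
    have hg' := congrArg (Int.cast : ℤ → 𝓞 K) hg
    push_cast at hg'
    have : (l1 : 𝓞 K) = (l1.gcdA l2 : 𝓞 K) * (l1 * l1) + (-(l1.gcdB l2 : 𝓞 K)) * (-((l1*l2 : ℕ) : 𝓞 K)) := by
      push_cast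
      linear_combination (l1 : 𝓞 K) * hg'
    rw [this]
    exact Ideal.add_mem _ (Ideal.mul_mem_left _ _ a1) (Ideal.mul_mem_left _ _ a2)
  have hdvd : P * P ∣ Ideal.span {(l1 : 𝓞 K)} := by
    rw [Ideal.dvd_iff_le, Ideal.span_singleton_le_iff_mem]; exact hPP
  have heq : P * P = Ideal.span {(l1 : 𝓞 K)} := by
    obtain ⟨J, hJ⟩ := hdvd
    have := congrArg Ideal.absNorm hJ
    rw [F_absNorm_nat H, map_mul, map_mul, hPn] at this
    have hJ1 : Ideal.absNorm J = 1 := by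
      have h0 : 0 < l1 * l1 := Nat.mul_pos hp1.pos hp1.pos
      apply Nat.eq_of_mul_eq_mul_left h0
      rw [← this]; ring
    rw [Ideal.absNorm_eq_one_iff] at hJ1
    rw [hJ, hJ1, Ideal.mul_top]
  let P' : nonZeroDivisors (Ideal (𝓞 K)) := ⟨P, mem_nonZeroDivisors_of_ne_zero hP0⟩
  have hne : ClassGroup.mk0 P' ≠ 1 := by
    intro h1
    rw [ClassGroup.mk0_eq_one_iff] at h1
    obtain ⟨⟨x, hx⟩⟩ := h1
    have hx' : P = Ideal.span {x} := hx
    have hn := hPn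
    rw [hx', Ideal.absNorm_span_singleton] at hn
    obtain ⟨u, v, huv⟩ := G_norm H x
    have hnn : 0 ≤ Algebra.norm ℤ x := by nlinarith [sq_nonneg (2*u+v), sq_nonneg v, mul_nonneg (Int.natCast_nonneg (l1*l2)) (sq_nonneg v)]
    have hnx : Algebra.norm ℤ x = l1 := by omega
    rw [hnx] at huv
    have hl2 : (5:ℤ) ≤ l2 := by
      have := hp2.two_le; omega
    have hl1 : (0:ℤ) < l1 := by exact_mod_cast hp1.pos
    push_cast at huv
    by_cases hv : v = 0
    · subst hv
      have hu : (l1:ℤ) = u * u := by nlinarith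
      have := (Nat.prime_iff_prime_int.1 hp1).irreducible.not_isSquare
      exact this ⟨u, hu⟩
    · have : 1 ≤ v^2 := by have := sq_nonneg v; have : v^2 ≠ 0 := pow_ne_zero 2 hv
                           omega
      nlinarith [sq_nonneg (2*u+v), mul_pos hl1 (show (0:ℤ) < l2 by linarith), mul_le_mul_of_nonneg_left this (mul_nonneg hl1.le (show (0:ℤ) ≤ l2 by linarith))]
  have hsq1 : ClassGroup.mk0 P' ^ 2 = 1 := by
    rw [sq, ← map_mul, ClassGroup.mk0_eq_one_iff]
    refine ⟨⟨(l1 : 𝓞 K), ?_⟩⟩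
    exact heq
  have := orderOf_eq_prime hsq1 hne
  rw [even_iff_two_dvd, ← this, classNumber, ← Nat.card_eq_fintype_card]
  exact orderOf_dvd_natCard _

lemma G_IQ (m : ℕ) (hm4 : m % 4 = 3) (hsq : Squarefree m) [NumberField ℚ⟮sqrtNeg m⟯] :
    IQ ℚ⟮sqrtNeg m⟯ m (AdjoinSimple.gen ℚ (sqrtNeg m)) where
  hs := by
    apply Subtype.ext
    push_cast
    simp [sqrtNeg_sq]
  hspan := by
    intro ⟨x, hx⟩
    have : x ∈ Algebra.adjoin ℚ {sqrtNeg m} := by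
      rw [← IntermediateField.adjoin_simple_toSubalgebra_of_isAlgebraic (isIntegral_sqrtNeg m).isAlgebraic]; exact hx
    have key : ∃ a b : ℚ, x = a + b * sqrtNeg m := by
      clear hx
      induction this using Algebra.adjoin_induction with
      | mem x hx => rw [Set.mem_singleton_iff] at hx; exact ⟨0, 1, by rw [hx]; simp⟩
      | algebraMap r => exact ⟨r, 0, by simp⟩
      | add x y hx hy hx' hy' =>
        obtain ⟨a, b, h⟩ := hx'
        obtain ⟨c, d, h'⟩ := hy'
        exact ⟨a+c, b+d, by rw [h, h']; push_cast; ring⟩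
      | mul x y hx hy hx' hy' =>
        obtain ⟨a, b, h⟩ := hx'
        obtain ⟨c, d, h'⟩ := hy'
        exact ⟨a*c-m*b*d, a*d+b*c, by rw [h, h']; push_cast; linear_combination (b*d:ℂ) * sqrtNeg_sq m⟩
    obtain ⟨a, b, h⟩ := key
    refine ⟨a, b, Subtype.ext ?_⟩
    push_cast
    simpa using h
  hm4 := hm4
  hsq := hsq

theorem G_main (l1 l2 : ℕ) [Fact l1.Prime] [Fact l2.Prime] (h : l1.Coprime l2)
    (hl1m : l1 % 4 = 3) (hl2m : l2 % 4 = 1) : Even (classNumSqrtNeg (l1*l2)) ∧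
    |∑ k : ZMod (l1*l2), psiZ l1 l2 h k * (k.val : ℤ)| ≤ (l1*l2 : ℕ) * (classNumSqrtNeg (l1*l2) : ℤ) := by
  haveI : FiniteDimensional ℚ ℚ⟮sqrtNeg (l1*l2)⟯ :=
    IntermediateField.adjoin.finiteDimensional (isIntegral_sqrtNeg (l1*l2))
  haveI : CharZero ℚ⟮sqrtNeg (l1*l2)⟯ :=
    charZero_of_injective_algebraMap (algebraMap ℚ ℚ⟮sqrtNeg (l1*l2)⟯).injective
  haveI : NumberField ℚ⟮sqrtNeg (l1*l2)⟯ := ⟨⟩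
  have hcl : classNumSqrtNeg (l1*l2) = NumberField.classNumber ℚ⟮sqrtNeg (l1*l2)⟯ := rfl
  have hm4 : (l1*l2) % 4 = 3 := by rw [Nat.mul_mod, hl1m, hl2m]
  have H := G_IQ (l1*l2) hm4 ((Nat.squarefree_mul h).2 ⟨(Fact.out : l1.Prime).prime.squarefree, (Fact.out : l2.Prime).prime.squarefree⟩)
  rw [hcl]
  refine ⟨G_even h hl1m hl2m H, ?_⟩
  have h1m : 1 < l1 * l2 := by omega
  have : Fact (1 < l1*l2) := ⟨h1m⟩
  have hne1 : psiC l1 l2 h ≠ 1 := by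
    intro h1
    have := psiC_odd l1 l2 h hl1m hl2m
    rw [DirichletCharacter.Odd, h1, MulChar.one_apply (by simp)] at this
    norm_num at this
  have hb := (D_resid _ (psiC l1 l2 h) hne1 (fun n hn => F_count h hl1m hl2m H n hn)).trans H.residue
  rw [C_main l1 l2 h hl1m hl2m] at hb
  have hm : (0:ℝ) < (l1*l2:ℕ) := by exact_mod_cast (by omega : 0 < l1*l2)
  have hs : 0 < √((l1*l2:ℕ):ℝ) := Real.sqrt_pos.2 hm
  have hpi := Real.pi_pos
  rw [div_mul_eq_mul_div, div_le_div_iff₀ (by positivity) hs] at hb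
  have h3 : |((∑ k : ZMod (l1*l2), psiZ l1 l2 h k * (k.val : ℤ) : ℤ) : ℝ)| ≤ (l1*l2:ℕ) * (NumberField.classNumber ℚ⟮sqrtNeg (l1*l2)⟯ : ℝ) := by
    have hX : 0 < Real.pi * √((l1*l2:ℕ):ℝ) := by positivity
    apply le_of_mul_le_mul_left _ hX
    linarith
  exact_mod_cast h3
end

section
open Finset

variable {F : Type*} [Field F] [Fintype F] (p : ℕ) [Fact p.Prime] [Algebra (ZMod p) F]

lemma H_charP : CharP F p := charP_of_injective_algebraMap (algebraMap (ZMod p) F).injective p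

lemma H_trace_frob (x : F) : Algebra.trace (ZMod p) F (x ^ p) = Algebra.trace (ZMod p) F x := by
  have := H_charP (F := F) p
  have h := Algebra.trace_eq_of_algEquiv (FiniteField.frobeniusAlgEquivOfAlgebraic (ZMod p) F) x
  simpa [ZMod.card] using h

lemma H_frob {R : Type*} [CommRing R] (χ : MulChar F R) (e : AddChar F R) (he : ∀ x, e (x^p) = e x) :
    gaussSum (χ^p) e = gaussSum χ e := by
  have := H_charP (F := F) p
  unfold gaussSum
  have hb : Function.Bijective (fun x : F => x^p) := by
    have := bijective_frobenius F p
    exact this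
  rw [← hb.sum_comp (fun x => χ x * e x)]
  refine sum_congr rfl fun x _ => ?_
  rw [he, MulChar.pow_apply' _ (Fact.out : p.Prime).ne_zero, map_pow]

lemma H_frob_pow {R : Type*} [CommRing R] (χ : MulChar F R) (e : AddChar F R) (he : ∀ x, e (x^p) = e x) (j : ℕ) :
    gaussSum (χ^(p^j)) e = gaussSum χ e := by
  induction j with
  | zero => simp
  | succ j ih => rw [pow_succ, pow_mul, H_frob p _ e he, ih]

lemma H_mul_dvd {R : Type*} [CommRing R] [IsDomain R] (χ φ : MulChar F R) (e : AddChar F R) (he : e ≠ 1) :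
    gaussSum (χ * φ) e ∣ gaussSum χ e * gaussSum φ e := by
  by_cases h : χ * φ = 1
  · rw [h, gaussSum_one_left he]; exact (isUnit_one.neg).dvd
  · exact ⟨_, (jacobiSum_mul_nontrivial h e).symm⟩

lemma H_pow_dvd {R : Type*} [CommRing R] [IsDomain R] (χ : MulChar F R) (e : AddChar F R) (he : e ≠ 1) (n : ℕ) :
    gaussSum (χ ^ n) e ∣ gaussSum χ e ^ n := by
  induction n with
  | zero => rw [pow_zero, gaussSum_one_left he]; exact (isUnit_one.neg).dvd
  | succ n ih =>
    rw [pow_succ, pow_succ]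
    exact (H_mul_dvd _ _ e he).trans (mul_dvd_mul_right ih _)

lemma H_teich {R k : Type*} [CommRing R] [IsDomain R] [Field k] (ρ : R →+* k) (ι : F →+* k)
    (ξ : R) (hξ : IsPrimitiveRoot ξ (Fintype.card F - 1)) :
    ∃ ω : MulChar F R, (∀ x : F, ρ (ω x) = ι x) ∧ (∀ j : ℕ, ω^j = 1 → Fintype.card F - 1 ∣ j) ∧
      ∀ χ : MulChar F R, ∃ j : ℕ, χ = ω^j := by
  classical
  obtain ⟨g, hg⟩ := IsCyclic.exists_generator (α := Fˣ)
  have hc : Fintype.card Fˣ = Fintype.card F - 1 := Fintype.card_units F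
  have hc0 : 0 < Fintype.card F - 1 := by rw [← hc]; exact Fintype.card_pos
  have hog : orderOf g = Fintype.card F - 1 := by
    rw [orderOf_eq_card_of_forall_mem_zpowers hg, Nat.card_eq_fintype_card, hc]
  have hgq : ι (g : F) ^ (Fintype.card F - 1) = 1 := by
    rw [← map_pow, ← Units.val_pow_eq_pow_val, ← hc, pow_card_eq_one]; simp
  have h1 := congrArg (fun P => Polynomial.eval (ι (g:F)) (P.map ρ)) (Polynomial.X_pow_sub_one_eq_prod hc0 hξ)
  simp [Polynomial.map_prod, Polynomial.eval_prod, hgq] at h1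
  obtain ⟨a, ha, ha'⟩ := prod_eq_zero_iff.1 h1.symm
  rw [Polynomial.mem_nthRootsFinset hc0] at ha
  rw [sub_eq_zero] at ha'
  have haord : ∀ d, a^d = 1 → Fintype.card F - 1 ∣ d := by
    intro d hd
    have : ι ((g^d : Fˣ) : F) = ι 1 := by
      rw [Units.val_pow_eq_pow_val, map_pow, ha', ← map_pow, hd, map_one, map_one]
    have := ι.injective this
    rw [← hog]
    exact orderOf_dvd_of_pow_eq_one (Units.ext this)
  have haprim : IsPrimitiveRoot a (Fintype.card F - 1) := ⟨ha, haord⟩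
  let au : Rˣ := (haprim.isUnit hc0.ne').unit
  have hau : (au : R) = a := rfl
  have hroot : au ∈ rootsOfUnity (Fintype.card Fˣ) R := by
    rw [_root_.mem_rootsOfUnity, hc]; ext; simpa [hau] using ha
  let ω := MulChar.ofRootOfUnity hroot hg
  have hω : ω g = a := MulChar.ofRootOfUnity_spec hroot hg
  refine ⟨ω, ?_, ?_, ?_⟩
  · intro x
    by_cases hx : x = 0
    · rw [hx, MulChar.map_zero, map_zero, map_zero]
    · obtain ⟨n, hn⟩ := (mem_powers_iff_mem_zpowers.2 (hg (Units.mk0 x hx)))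
      have : x = (g:F)^n := by
        rw [← Units.val_pow_eq_pow_val]; simp only at hn; rw [hn]; simp
      rw [this, map_pow, map_pow, map_pow, hω, ha']
  · intro j hj
    apply haord
    rw [← hω, ← MulChar.pow_apply_coe, hj, MulChar.one_apply_coe]
  · intro χ
    have hχ : χ g ^ (Fintype.card F - 1) = 1 := by
      rw [← map_pow, ← Units.val_pow_eq_pow_val, ← hc, pow_card_eq_one]; simp
    have : NeZero (Fintype.card F - 1) := ⟨hc0.ne'⟩
    obtain ⟨j, _, hj⟩ := haprim.eq_pow_of_pow_eq_one hχ
    refine ⟨j, (MulChar.eq_iff hg _ _).2 ?_⟩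
    rw [MulChar.pow_apply_coe, hω, hj]

lemma H_binom {R : Type*} [CommRing R] (π : R) (n : ℕ) : ∃ w, (1+π)^n = 1 + n * π + π^2 * w := by
  induction n with
  | zero => exact ⟨0, by simp⟩
  | succ n ih =>
    obtain ⟨w, hw⟩ := ih
    exact ⟨w * (1+π) + n, by rw [pow_succ, hw]; push_cast; ring⟩

lemma H_pi {R k : Type*} [CommRing R] [IsDomain R] [Field k] (ρ : R →+* k) (hρ : ∀ x, ρ x ≠ 0 → IsUnit x)
    [CharP k p] (ι : F →+* k) (f : ℕ) (hcard : Fintype.card F = p^f) (hq : 2 < Fintype.card F)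
    (ζ : R) (hζ : ζ^p = 1) (e : AddChar F R) (he : ∀ x, e x = ζ^(Algebra.trace (ZMod p) F x).val)
    (ω : MulChar F R) (hω : ∀ x : F, ρ (ω x) = ι x) (hω1 : ω⁻¹ ≠ 1) :
    gaussSum ω⁻¹ e ∣ ζ - 1 := by
  classical
  have hpp : p.Prime := Fact.out
  have := H_charP (F := F) p
  choose w hw using H_binom (ζ - 1)
  have hρπ : ρ (ζ - 1) = 0 := by
    have : (ρ ζ - 1)^p = 0 := by rw [sub_pow_char, ← map_pow, hζ]; simp
    rw [map_sub, map_one]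
    exact pow_eq_zero_iff hpp.ne_zero |>.1 this
  have hG : gaussSum ω⁻¹ e = (ζ - 1) * (∑ x, ω⁻¹ x * ((Algebra.trace (ZMod p) F x).val : R) +
      (ζ - 1) * ∑ x, ω⁻¹ x * w (Algebra.trace (ZMod p) F x).val) := by
    have h0 := MulChar.sum_eq_zero_of_ne_one hω1
    rw [gaussSum]
    have h2 : ∀ x : F, ω⁻¹ x * e x = ω⁻¹ x + ((ζ - 1) * (ω⁻¹ x * ((Algebra.trace (ZMod p) F x).val : R)) +
        (ζ - 1) * ((ζ - 1) * (ω⁻¹ x * w (Algebra.trace (ZMod p) F x).val))) := by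
      intro x
      have := hw (Algebra.trace (ZMod p) F x).val
      rw [add_sub_cancel] at this
      rw [he, this]; ring
    rw [sum_congr rfl (fun x _ => h2 x), sum_add_distrib, h0, zero_add, sum_add_distrib, mul_add, mul_sum, mul_sum, mul_sum]
  have hS : ∀ i ∈ range f, ∑ x : F, x⁻¹ * x^(p^i) = if i = 0 then (-1:F) else 0 := by
    intro i hi
    rw [mem_range] at hi
    have hpi : 0 < p^i := pow_pos hpp.pos i
    have h3 : ∑ x : F, x⁻¹ * x^(p^i) = ∑ x : Fˣ, (x^(p^i-1) : F) := by
      rw [Fintype.sum_eq_add_sum_compl (0:F)]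
      simp only [inv_zero, zero_mul, zero_add]
      symm
      refine sum_bij (fun x _ => (x:F)) (by simp) (fun _ _ _ _ h => Units.ext h) ?_ ?_
      · intro b hb
        simp at hb
        exact ⟨Units.mk0 b hb, mem_univ _, rfl⟩
      · intro x _
        obtain ⟨n, hn⟩ : ∃ n, p^i = n+1 := ⟨p^i-1, by omega⟩
        rw [hn, Nat.add_sub_cancel, pow_succ']
        field_simp
    rw [h3, FiniteField.sum_pow_units]
    by_cases h0 : i = 0
    · simp [h0]
    · rw [if_neg h0, if_neg]
      intro hd
      have h1 : 1 < p^i := Nat.one_lt_pow h0 hpp.one_lt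
      have h2 := Nat.le_of_dvd (by omega) hd
      rw [hcard] at h2
      have h4 : p^i < p^f := Nat.pow_lt_pow_right hpp.one_lt hi
      omega
  have hf : 0 < f := by
    rcases Nat.eq_zero_or_pos f with h | h
    · rw [hcard, h] at hq; simp at hq
    · exact h
  have hfin : Module.finrank (ZMod p) F = f := by
    have := Module.card_eq_pow_finrank (K := ZMod p) (V := F)
    rw [ZMod.card, hcard] at this
    exact (Nat.pow_right_injective hpp.two_le this).symm
  have hA : ρ (∑ x, ω⁻¹ x * ((Algebra.trace (ZMod p) F x).val : R)) = -1 := by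
    have : ∀ x : F, ρ (ω⁻¹ x * ((Algebra.trace (ZMod p) F x).val : R)) = ι (∑ i ∈ range f, x⁻¹ * x^(p^i)) := by
      intro x
      have ht := FiniteField.algebraMap_trace_eq_sum_pow (ZMod p) F x
      rw [Nat.card_zmod, hfin] at ht
      rw [map_mul, MulChar.inv_apply', hω, map_natCast, ← mul_sum, map_mul, ← ht]
      congr 1
      conv_rhs => rw [← ZMod.natCast_zmod_val (Algebra.trace (ZMod p) F x)]
      rw [map_natCast, map_natCast]
    rw [map_sum, sum_congr rfl (fun x _ => this x), ← map_sum, sum_comm, sum_congr rfl hS, sum_ite_eq', if_pos (mem_range.2 hf)]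
    simp
  rw [hG]
  rw [IsUnit.mul_right_dvd]
  apply hρ
  rw [map_add, hA, map_mul, hρπ, zero_mul, add_zero]
  exact neg_ne_zero.2 one_ne_zero

lemma H_pi_p {R : Type*} [CommRing R] [IsDomain R] (ζ : R) (hζ : IsPrimitiveRoot ζ p) : (ζ - 1)^(p-1) ∣ (p : R) := by
  obtain ⟨n, hn⟩ : ∃ n, p = n + 1 := ⟨p-1, by have := (Fact.out : p.Prime).pos; omega⟩
  have h := IsPrimitiveRoot.prod_pow_sub_one_eq_order (μ := ζ) (n := n) (by rw [← hn]; exact hζ)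
  have h2 : (ζ-1)^n ∣ ∏ k ∈ range n, (ζ^(k+1) - 1) := by
    rw [← card_range n, ← prod_const, card_range]
    refine prod_dvd_prod_of_dvd _ _ fun k _ => sub_one_dvd_pow_sub_one _ _
  have h3 : (p:R) = n + 1 := by rw [hn]; push_cast; rfl
  rw [hn, Nat.add_sub_cancel]
  rw [← hn, h3, ← h]
  exact h2.mul_left _

/-- Horner digits sum -/
lemma H_digits (N u f : ℕ) (hN : 0 < N) (hcop : p^f % N = 1 % N) :
    ∃ d : ℕ → ℕ, (∀ j, p^(j+1) * u / N = p * (p^j*u/N) + d j) ∧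
      N * ∑ j ∈ range f, d j = (p-1) * ∑ j ∈ range f, (p^j*u)%N := by
  refine ⟨fun j => p * ((p^j*u)%N) / N, ?_, ?_⟩
  · intro j
    conv_lhs => rw [pow_succ', mul_assoc, ← Nat.div_add_mod (p^j*u) N]
    rw [show p * (N * (p^j*u/N) + (p^j*u)%N) = p * ((p^j*u)%N) + N * (p * (p^j*u/N)) by ring,
      Nat.add_mul_div_left _ _ hN, add_comm]
  · have key : ∀ n, N * ∑ j ∈ range n, (p * ((p^j*u)%N) / N) + (p^n*u)%N = (p-1) * ∑ j ∈ range n, (p^j*u)%N + u%N := by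
      intro n
      induction n with
      | zero => simp
      | succ n ih =>
        rw [sum_range_succ, sum_range_succ]
        have h1 : p^(n+1)*u % N = (p * ((p^n*u)%N)) % N := by
          rw [pow_succ', mul_assoc, Nat.mul_mod_mod]
        have h2 := Nat.div_add_mod (p * ((p^n*u)%N)) N
        rw [h1, mul_add, mul_add]
        obtain ⟨q, hq⟩ : ∃ q, p = q + 1 := ⟨p-1, by have := (Fact.out : p.Prime).pos; omega⟩
        have h3 : (p-1) * ((p^n*u)%N) + (p^n*u)%N = p * ((p^n*u)%N) := by
          rw [Nat.sub_mul, one_mul]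
          exact Nat.sub_add_cancel (Nat.le_mul_of_pos_left _ (Fact.out : p.Prime).pos)
        omega
    have h := key f
    have h4 : p^f*u % N = u % N := by
      rw [Nat.mul_mod, hcop, ← Nat.mul_mod, one_mul]
    simp only
    omega

theorem H_main {R k : Type*} [CommRing R] [IsDomain R] [IsIntegrallyClosed R] [Field k] (ρ : R →+* k)
    (hρ : ∀ x, ρ x ≠ 0 → IsUnit x)
    [CharP k p] (ι : F →+* k) (f : ℕ) (hcard : Fintype.card F = p^f)
    (ζ : R) (hζ : IsPrimitiveRoot ζ p) (ξ : R) (hξ : IsPrimitiveRoot ξ (Fintype.card F - 1))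
    (e : AddChar F R) (he : ∀ x, e x = ζ^(Algebra.trace (ZMod p) F x).val) (he1 : e ≠ 1)
    (χ : MulChar F R) (N : ℕ) (hN : 1 < N) (hχ : orderOf χ = N) (hNq : N ∣ p^f - 1) (t : ℕ)
    (ht : ∀ u, u.Coprime N → ∑ j ∈ range f, (p^j*u)%N ≤ N * t) :
    gaussSum χ e ∣ (p:R)^t := by
  have hpp : p.Prime := Fact.out
  have hpf : 0 < p^f := pow_pos hpp.pos f
  have hq2 : 2 < p^f := by
    by_contra hlt
    have h1 : 0 < p^f - 1 := by
      have : 1 < Fintype.card F := Fintype.one_lt_card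
      omega
    have := Nat.le_of_dvd h1 hNq
    omega
  obtain ⟨ω, hω, hωo, hωs⟩ := H_teich ρ ι ξ hξ
  rw [hcard] at hωo
  have hωq : ω^(p^f-1) = 1 := by
    ext x
    rw [MulChar.pow_apply_coe, ← map_pow, ← hcard, FiniteField.pow_card_sub_one_eq_one _ x.ne_zero, map_one, MulChar.one_apply_coe]
  obtain ⟨M, hM⟩ := hNq
  have hM0 : 0 < M := by rcases Nat.eq_zero_or_pos M with h | h; · rw [h] at hM; omega
                         · exact h
  have hω1 : ω⁻¹ ≠ 1 := by
    intro h
    have := hωo 1 (by rw [pow_one]; exact inv_eq_one.1 h)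
    have := Nat.le_of_dvd one_pos this
    omega
  -- write χ = (ω⁻¹)^(u M)
  obtain ⟨j, hj⟩ := hωs χ⁻¹
  have hjM : M ∣ j := by
    have : ω^(j*N) = 1 := by rw [pow_mul, ← hj, inv_pow, ← hχ, pow_orderOf_eq_one, inv_one]
    have := hωo _ this
    rw [hM, mul_comm] at this
    exact Nat.dvd_of_mul_dvd_mul_right (by omega) this
  obtain ⟨u0, hu0⟩ := hjM
  obtain ⟨u, huN, hχu⟩ : ∃ u, u < N ∧ χ = (ω⁻¹)^(M*u) := by
    refine ⟨u0 % N, Nat.mod_lt _ (by omega), ?_⟩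
    have h0 : χ = (ω⁻¹)^(M*u0) := by rw [inv_pow, ← hu0, ← hj, inv_inv]
    rw [h0]
    conv_lhs => rw [← Nat.div_add_mod u0 N, mul_add, pow_add, ← mul_assoc, mul_comm M N, ← hM, pow_mul, inv_pow, hωq, inv_one, one_pow, one_mul]
  have hcop : u.Coprime N := by
    by_contra hg
    have hg' : u.gcd N ≠ 1 := hg
    have hgd := Nat.gcd_dvd_left u N
    obtain ⟨N', hN'⟩ := Nat.gcd_dvd_right u N
    obtain ⟨u', hu'⟩ := hgd
    have h1 : χ^N' = 1 := by
      rw [hχu, ← pow_mul]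
      have : M * u * N' = (p^f-1) * u' := by
        rw [hM]; 
        calc M * u * N' = M * (u.gcd N * u') * N' := by rw [← hu']
          _ = M * (u.gcd N * N') * u' := by ring
          _ = _ := by rw [← hN']; ring
      rw [this, pow_mul, inv_pow, hωq, inv_one, one_pow]
    have h2 := orderOf_dvd_of_pow_eq_one h1
    rw [hχ] at h2
    have hN'0 : 0 < N' := by
      rcases Nat.eq_zero_or_pos N' with h | h
      · rw [h] at hN'; omega
      · exact h
    have h3 := Nat.le_of_dvd hN'0 h2
    have h4 : 0 < u.gcd N := Nat.gcd_pos_of_pos_right _ (by omega)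
    have : 2 ≤ u.gcd N := by omega
    nlinarith
  obtain ⟨d, hd1, hd2⟩ := H_digits p N u f (by omega) (by
    have : p^f = 1 + N * M := by omega
    rw [this, Nat.add_mul_mod_self_left])
  have hfr : ∀ x, e (x^p) = e x := fun x => by rw [he, he, H_trace_frob]
  have hπ := H_pi p ρ hρ ι f hcard (by rw [hcard]; exact hq2) ζ hζ.pow_eq_one e he ω hω hω1
  have key : ∀ n, gaussSum ((ω⁻¹)^(p^n*u/N)) e ∣ (ζ-1)^(∑ j ∈ range n, d j) := by
    intro n
    induction n with
    | zero =>
      rw [pow_zero, one_mul, Nat.div_eq_of_lt huN, pow_zero, gaussSum_one_left he1]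
      exact (isUnit_one.neg).dvd
    | succ n ih =>
      rw [hd1, pow_add, sum_range_succ, pow_add]
      refine (H_mul_dvd _ _ e he1).trans (mul_dvd_mul ?_ ?_)
      · rw [mul_comm p, pow_mul, H_frob p _ e hfr]; exact ih
      · exact (H_pow_dvd _ e he1 _).trans (pow_dvd_pow_of_dvd hπ _)
  have hA : p^f*u/N = M*u := by
    have : p^f*u = u + N * (M * u) := by
      have : p^f = 1 + N * M := by omega
      rw [this]; ring
    rw [this, Nat.add_mul_div_left _ _ (by omega), Nat.div_eq_of_lt huN, zero_add]
  have h1 := key f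
  rw [hA, ← hχu] at h1
  have h2 : gaussSum χ e ^ N ∣ ((p:R)^t)^N := by
    refine (pow_dvd_pow_of_dvd h1 N).trans ?_
    rw [← pow_mul, mul_comm _ N, hd2, pow_mul]
    refine (pow_dvd_pow_of_dvd (H_pi_p p ζ hζ) _).trans ?_
    rw [← pow_mul, mul_comm t N]
    exact pow_dvd_pow _ (ht u hcop)
  exact (IsIntegrallyClosed.pow_dvd_pow_iff (by omega)).1 h2
end

section
open Finset

lemma J_mem (V : ValuationSubring ℂ) {x : ℂ} (hx : IsIntegral ℤ x) : x ∈ V := by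
  have h : IsIntegral V x := hx.tower_top
  have := IsIntegrallyClosed.algebraMap_eq_of_integral (R := V) (K := ℂ) h
  obtain ⟨y, rfl⟩ := this
  exact y.2

lemma J_int {x : ℂ} (h : ∀ V : ValuationSubring ℂ, x ∈ V) : IsIntegral ℤ x := by
  have h1 := iInf_valuationSubring_superset (K := ℂ) (s := ∅)
  have h2 : x ∈ (integralClosure (Subring.closure (∅ : Set ℂ)) ℂ).toSubring := by
    rw [← h1]
    simp only [Subring.mem_iInf]
    intro V
    exact h V
  have h3 : IsIntegral (Subring.closure (∅ : Set ℂ)) x := h2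
  obtain ⟨P, hP, hP0⟩ := h3
  have hsurj : Function.Surjective (algebraMap ℤ (Subring.closure (∅ : Set ℂ))) := by
    intro ⟨y, hy⟩
    rw [Subring.closure_empty, Subring.mem_bot] at hy
    obtain ⟨n, hn⟩ := hy
    exact ⟨n, Subtype.ext (by simp [hn])⟩
  obtain ⟨Q, hQ, _, hQm⟩ := Polynomial.lifts_and_natDegree_eq_and_monic (f := algebraMap ℤ (Subring.closure (∅ : Set ℂ))) (p := P)
    ((Polynomial.mem_lifts _).2 (Polynomial.map_surjective _ hsurj P)) hP
  refine ⟨Q, hQm, ?_⟩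
  rw [← hQ, Polynomial.eval₂_map] at hP0
  rw [← hP0]
  congr 1

lemma J_algClosed (V : ValuationSubring ℂ) : IsAlgClosed (IsLocalRing.ResidueField V) := by
  refine IsAlgClosed.of_exists_root _ fun P hP hirr => ?_
  obtain ⟨Q, hQ, hQd, hQm⟩ := Polynomial.lifts_and_natDegree_eq_and_monic (f := IsLocalRing.residue V) (p := P)
    ((Polynomial.mem_lifts _).2 (Polynomial.map_surjective _ IsLocalRing.residue_surjective P)) hP
  have hd : (Q.map (algebraMap V ℂ)).degree ≠ 0 := by
    rw [Polynomial.degree_map_eq_of_injective (IsFractionRing.injective V ℂ)]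
    intro h0
    have := Polynomial.natDegree_eq_of_degree_eq_some h0
    rw [hQd] at this
    exact hirr.natDegree_pos.ne' this
  obtain ⟨z, hz⟩ := IsAlgClosed.exists_root _ hd
  rw [Polynomial.IsRoot, Polynomial.eval_map] at hz
  obtain ⟨y, rfl⟩ := IsIntegrallyClosed.algebraMap_eq_of_integral (R := V) (K := ℂ) ⟨Q, hQm, hz⟩
  rw [Polynomial.eval₂_at_apply] at hz
  have hy := (IsFractionRing.injective V ℂ) (hz.trans (map_zero _).symm)
  refine ⟨IsLocalRing.residue V y, ?_⟩
  rw [← hQ, Polynomial.eval_map, Polynomial.eval₂_at_apply, hy, map_zero]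

lemma J_root (V : ValuationSubring ℂ) {x : ℂ} {n : ℕ} (hn : n ≠ 0) (hx : x^n = 1) : x ∈ V :=
  J_mem V (IsIntegral.of_pow (Nat.pos_of_ne_zero hn) (by rw [hx]; exact isIntegral_one))

variable {F : Type*} [Field F] [Fintype F]

lemma J_char_int (χ : MulChar F ℂ) (x : F) : IsIntegral ℤ (χ x) := by
  by_cases hx : x = 0
  · rw [hx, MulChar.map_zero]; exact isIntegral_zero
  · refine IsIntegral.of_pow (n := Fintype.card F - 1) ?_ ?_
    · have := Fintype.one_lt_card (α := F); omega
    · rw [← map_pow, FiniteField.pow_card_sub_one_eq_one x hx, map_one]; exact isIntegral_one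

lemma J_add_int (e : AddChar F ℂ) (x : F) : IsIntegral ℤ (e x) := by
  refine IsIntegral.of_pow (n := Fintype.card F) Fintype.card_pos ?_
  rw [← AddChar.map_nsmul_eq_pow, card_nsmul_eq_zero, AddChar.map_zero_eq_one]; exact isIntegral_one

lemma J_gauss_int (χ : MulChar F ℂ) (e : AddChar F ℂ) : IsIntegral ℤ (gaussSum χ e) :=
  IsIntegral.sum _ fun x _ => (J_char_int χ x).mul (J_add_int e x)

theorem J_main (p : ℕ) [Fact p.Prime] [Algebra (ZMod p) F] (f : ℕ) (hcard : Fintype.card F = p^f)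
    (ζ : ℂ) (hζ : IsPrimitiveRoot ζ p)
    (e : AddChar F ℂ) (he : ∀ x, e x = ζ^(Algebra.trace (ZMod p) F x).val) (he1 : e ≠ 1)
    (χ : MulChar F ℂ) (N : ℕ) (hN : 1 < N) (hχ : orderOf χ = N) (hNq : N ∣ p^f - 1) (t : ℕ)
    (ht : ∀ u, u.Coprime N → ∑ j ∈ range f, (p^j*u)%N ≤ N * t) (V : ValuationSubring ℂ) :
    (p:ℂ)^t / gaussSum χ e ∈ V := by
  have hpp : p.Prime := Fact.out
  have hp0 : (p:ℂ) ≠ 0 := by exact_mod_cast hpp.ne_zero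
  have hpV : (p:ℂ) ∈ V := natCast_mem V p
  have hχ1 : χ ≠ 1 := by intro h; rw [h, orderOf_one] at hχ; omega
  have hprod := gaussSum_mul_gaussSum_eq_card hχ1 (AddChar.IsPrimitive.of_ne_one he1)
  rw [hcard] at hprod
  push_cast at hprod
  have hG0 : gaussSum χ e ≠ 0 := by
    intro h0; rw [h0, zero_mul] at hprod; exact pow_ne_zero f hp0 hprod.symm
  by_cases hinv : (p:ℂ)⁻¹ ∈ V
  · have : (p:ℂ)^t / gaussSum χ e = p^t * gaussSum χ⁻¹ e⁻¹ * (p:ℂ)⁻¹^f := by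
      rw [div_eq_iff hG0, show (p:ℂ)^t * gaussSum χ⁻¹ e⁻¹ * (p:ℂ)⁻¹^f * gaussSum χ e =
        p^t * ((p:ℂ)⁻¹^f * (gaussSum χ e * gaussSum χ⁻¹ e⁻¹)) by ring, hprod,
        inv_pow, inv_mul_cancel₀ (pow_ne_zero f hp0), mul_one]
    rw [this]
    exact V.mul_mem _ _ (V.mul_mem _ _ (pow_mem hpV t) (J_mem V (J_gauss_int _ _))) (pow_mem hinv f)
  · let k := IsLocalRing.ResidueField V
    have hρp : IsLocalRing.residue V (p:V) = 0 := by
      rw [IsLocalRing.residue_eq_zero_iff, IsLocalRing.mem_maximalIdeal, mem_nonunits_iff]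
      intro hu
      obtain ⟨y, hy⟩ := hu.exists_right_inv
      apply hinv
      have : (p:ℂ) * (y:ℂ) = 1 := by exact_mod_cast congrArg (fun z : V => (z:ℂ)) hy
      rw [inv_eq_of_mul_eq_one_right this]; exact y.2
    have : CharP k p := by
      have h0 : (p : k) = 0 := by rw [← hρp, map_natCast]
      exact (CharP.charP_iff_prime_eq_zero hpp).2 h0
    have := J_algClosed V
    let _ : Algebra (ZMod p) k := ZMod.algebra k p
    have : Algebra.IsAlgebraic (ZMod p) F := Algebra.IsAlgebraic.of_finite _ _
    let ι : F →ₐ[ZMod p] k := IsAlgClosed.lift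
    have hq1 : Fintype.card F - 1 ≠ 0 := by have := Fintype.one_lt_card (α := F); omega
    have hξ := Complex.isPrimitiveRoot_exp (Fintype.card F - 1) hq1
    have hsub : Function.Injective V.subtype := Subtype.val_injective
    let χV : MulChar F V :=
      { toFun := fun x => ⟨χ x, J_mem V (J_char_int χ x)⟩
        map_one' := Subtype.ext (map_one χ)
        map_mul' := fun x y => Subtype.ext (map_mul χ x y)
        map_nonunit' := fun x hx => Subtype.ext (χ.map_nonunit hx) }
    let eV : AddChar F V :=
      { toFun := fun x => ⟨e x, J_mem V (J_add_int e x)⟩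
        map_zero_eq_one' := Subtype.ext (AddChar.map_zero_eq_one e)
        map_add_eq_mul' := fun x y => Subtype.ext (AddChar.map_add_eq_mul e x y) }
    have hχV : χV.ringHomComp V.subtype = χ := rfl
    have hoV : orderOf χV = N := by
      rw [← hχ, orderOf_eq_orderOf_iff]
      intro n
      rw [← hχV, MulChar.ringHomComp_pow]
      exact (MulChar.ringHomComp_eq_one_iff hsub).symm
    have heV1 : eV ≠ 1 := by
      intro h
      apply he1
      ext x
      exact congrArg (fun E : AddChar F V => ((E x : V) : ℂ)) h
    have hgV : ((gaussSum χV eV : V) : ℂ) = gaussSum χ e := by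
      show V.subtype _ = _
      rw [gaussSum, map_sum]
      rfl
    have hd := H_main p (IsLocalRing.residue V) (fun x hx => by
        by_contra hu
        exact hx ((IsLocalRing.residue_eq_zero_iff x).2 hu)) (ι : F →+* k) f hcard
        ⟨ζ, J_root V hpp.ne_zero hζ.pow_eq_one⟩ (IsPrimitiveRoot.of_map_of_injective (f := V.subtype) hζ hsub)
        ⟨_, J_root V hq1 hξ.pow_eq_one⟩ (IsPrimitiveRoot.of_map_of_injective (f := V.subtype) hξ hsub)
        eV (fun x => Subtype.ext (he x)) heV1 χV N hN hoV hNq t ht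
    obtain ⟨c, hc⟩ := hd
    have hc' := congrArg (fun z : V => (z:ℂ)) hc
    push_cast at hc'
    rw [hgV] at hc'
    rw [hc', mul_div_cancel_left₀ _ hG0]
    exact c.2
end

section
open Finset

lemma K_neg_one (l r p : ℕ) (hl : l.Prime) (hl2 : l ≠ 2) (hr : 1 ≤ r) (hord : orderOf (p : ZMod (l^r)) = Nat.totient (l^r)) :
    (p : ZMod (l^r))^(Nat.totient (l^r) / 2) = -1 := by
  have hl3 : 2 < l := lt_of_le_of_ne hl.two_le (Ne.symm hl2)
  have hlr : 2 < l^r := lt_of_lt_of_le hl3 (Nat.le_self_pow (by omega) l)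
  have hev := Nat.totient_even hlr
  have hpos : 0 < Nat.totient (l^r) := Nat.totient_pos.2 (by omega)
  set y := (p : ZMod (l^r))^(Nat.totient (l^r) / 2) with hy
  have hy2 : y^2 = 1 := by
    rw [hy, ← pow_mul, Nat.div_mul_cancel hev.two_dvd, ← hord, pow_orderOf_eq_one]
  have hy1 : y ≠ 1 := by
    intro h
    have := orderOf_dvd_of_pow_eq_one h
    rw [hord] at this
    have := Nat.le_of_dvd (by obtain ⟨k, hk⟩ := hev; omega) this
    obtain ⟨k, hk⟩ := hev; omega
  have : NeZero (l^r) := ⟨by omega⟩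
  obtain ⟨z, hz⟩ : ∃ z : ℤ, (z : ZMod (l^r)) = y := ZMod.intCast_surjective y
  have hd : ((l^r : ℕ) : ℤ) ∣ (z - 1) * (z + 1) := by
    rw [← ZMod.intCast_zmod_eq_zero_iff_dvd]
    push_cast; rw [hz]; linear_combination hy2
  have hlp : Prime (l:ℤ) := Nat.prime_iff_prime_int.1 hl
  have hc : IsCoprime ((l^r : ℕ):ℤ) (z-1) ∨ IsCoprime ((l^r : ℕ):ℤ) (z+1) := by
    by_cases h1 : (l:ℤ) ∣ z - 1
    · right
      push_cast
      refine IsCoprime.pow_left ((Prime.coprime_iff_not_dvd hlp).2 fun h2 => ?_)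
      have h3 : (l:ℤ) ∣ 2 := by have := dvd_sub h2 h1; ring_nf at this; exact this
      have := Int.le_of_dvd (by norm_num) h3
      omega
    · left
      push_cast
      exact IsCoprime.pow_left ((Prime.coprime_iff_not_dvd hlp).2 h1)
  rcases hc with hc | hc
  · have := hc.dvd_of_dvd_mul_left hd
    rw [← ZMod.intCast_zmod_eq_zero_iff_dvd] at this
    push_cast at this; rw [hz] at this
    exact eq_neg_of_add_eq_zero_left this
  · have := hc.dvd_of_dvd_mul_right hd
    rw [← ZMod.intCast_zmod_eq_zero_iff_dvd] at this
    push_cast at this; rw [hz] at this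
    exact absurd (sub_eq_zero.1 this) hy1

lemma K_quad (l r p : ℕ) [Fact l.Prime] (hl2 : l ≠ 2) (hr : 1 ≤ r) (hord : orderOf (p : ZMod (l^r)) = Nat.totient (l^r)) :
    quadraticChar (ZMod l) (p : ZMod l) = -1 := by
  have hl : l.Prime := Fact.out
  have h := K_neg_one l r p hl hl2 hr hord
  have hl3 : 2 < l := lt_of_le_of_ne hl.two_le (Ne.symm hl2)
  have h2 := congrArg (ZMod.castHom (dvd_pow_self l (by omega : r ≠ 0)) (ZMod l)) h
  rw [map_pow, map_natCast, map_neg, map_one] at h2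
  have hchar : ringChar (ZMod l) ≠ 2 := by rw [ZMod.ringChar_zmod_n]; exact hl2
  have hpne : (p : ZMod l) ≠ 0 := by
    intro h0
    rw [h0] at h2
    have hpos : 0 < Nat.totient (l^r) / 2 := by
      have hlr : 2 < l^r := lt_of_lt_of_le hl3 (Nat.le_self_pow (by omega) l)
      have hev := Nat.totient_even hlr
      have hpos : 0 < Nat.totient (l^r) := Nat.totient_pos.2 (by omega)
      obtain ⟨k, hk⟩ := hev; omega
    rw [zero_pow hpos.ne'] at h2
    exact one_ne_zero (neg_eq_zero.1 h2.symm)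
  have hodd : l % 2 = 1 := hl.eq_two_or_odd.resolve_left hl2
  rcases quadraticChar_dichotomy hpne with h1 | h1
  · exfalso
    rw [quadraticChar_one_iff_isSquare hpne, ZMod.euler_criterion l hpne] at h1
    have ht : Nat.totient (l^r) / 2 = l/2 * l^(r-1) := by
      rw [Nat.totient_prime_pow hl (by omega), show l - 1 = 2 * (l/2) by omega]
      rw [show l^(r-1) * (2*(l/2)) = 2 * (l/2 * l^(r-1)) by ring]
      simp
    rw [ht, pow_mul, h1, one_pow] at h2
    have : Fact (2 < l) := ⟨hl3⟩
    exact ZMod.neg_one_ne_one h2.symm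
  · exact h1

lemma K_sum_val (n : ℕ) [NeZero n] (f : ℕ → ℤ) : ∑ x : ZMod n, f x.val = ∑ i ∈ range n, f i := by
  refine sum_bij (fun x _ => x.val) (fun x _ => mem_range.2 x.val_lt) (fun _ _ _ _ h => ZMod.val_injective n h) ?_ (fun _ _ => rfl)
  intro b hb
  exact ⟨(b : ZMod n), mem_univ _, ZMod.val_cast_of_lt (mem_range.1 hb)⟩

variable (l1 l2 : ℕ) [Fact l1.Prime] [Fact l2.Prime] (h : l1.Coprime l2)

lemma K_block (hne : psiZ l1 l2 h ≠ 1) [NeZero (l1*l2)] (s : ℕ) :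
    ∑ i ∈ range (l1*l2*s), psiZ l1 l2 h (i : ZMod (l1*l2)) * (i:ℤ) = s * ∑ k : ZMod (l1*l2), psiZ l1 l2 h k * (k.val : ℤ) := by
  have h0 : ∑ i ∈ range (l1*l2), psiZ l1 l2 h (i : ZMod (l1*l2)) = 0 := by
    rw [← K_sum_val (l1*l2) (fun i => psiZ l1 l2 h (i : ZMod (l1*l2)))]
    simp only [ZMod.natCast_zmod_val]
    exact MulChar.sum_eq_zero_of_ne_one hne
  have h1 : ∑ k : ZMod (l1*l2), psiZ l1 l2 h k * (k.val : ℤ) = ∑ i ∈ range (l1*l2), psiZ l1 l2 h (i : ZMod (l1*l2)) * (i:ℤ) := by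
    rw [← K_sum_val (l1*l2) (fun i => psiZ l1 l2 h (i : ZMod (l1*l2)) * (i:ℤ))]
    simp only [ZMod.natCast_zmod_val]
  rw [h1]
  induction s with
  | zero => simp
  | succ s ih =>
    rw [mul_add, mul_one, sum_range_add, ih]
    have : ∀ i ∈ range (l1*l2), psiZ l1 l2 h ((l1*l2*s+i : ℕ) : ZMod (l1*l2)) * ((l1*l2*s+i : ℕ):ℤ) =
        psiZ l1 l2 h (i : ZMod (l1*l2)) * (l1*l2*s:ℕ) + psiZ l1 l2 h (i : ZMod (l1*l2)) * (i:ℤ) := by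
      intro i _
      have : ((l1*l2*s+i : ℕ) : ZMod (l1*l2)) = i := by
        rw [Nat.cast_add, Nat.cast_mul (l1*l2), ZMod.natCast_self, zero_mul, zero_add]
      rw [this]; push_cast; ring
    rw [sum_congr rfl this, sum_add_distrib, ← sum_mul, h0]
    push_cast; ring
end

section
open Finset

variable (l1 l2 : ℕ) [Fact l1.Prime] [Fact l2.Prime] (h : l1.Coprime l2)

noncomputable def psW (N : ℕ) (hd : l1*l2 ∣ N) : (ZMod N)ˣ →* ℤ :=
  ((psiZ l1 l2 h).toMonoidHom.comp (ZMod.castHom hd (ZMod (l1*l2))).toMonoidHom).comp (Units.coeHom (ZMod N))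

lemma psW_apply (N : ℕ) (hd : l1*l2 ∣ N) (g : (ZMod N)ˣ) : psW l1 l2 h N hd g = psiZ l1 l2 h (ZMod.castHom hd (ZMod (l1*l2)) g) := rfl

lemma psW_val (N : ℕ) [NeZero N] (hd : l1*l2 ∣ N) (g : (ZMod N)ˣ) : psW l1 l2 h N hd g = psiZ l1 l2 h (((g : ZMod N).val : ℕ) : ZMod (l1*l2)) := by
  rw [psW_apply]
  conv_lhs => rw [← ZMod.natCast_zmod_val (g : ZMod N), map_natCast]

lemma psW_sq (N : ℕ) (hd : l1*l2 ∣ N) (g : (ZMod N)ˣ) : psW l1 l2 h N hd g = 1 ∨ psW l1 l2 h N hd g = -1 := by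
  have := ((Group.isUnit g).map (psW l1 l2 h N hd : (ZMod N)ˣ →* ℤ) : IsUnit (psW l1 l2 h N hd g))
  exact Int.isUnit_iff.1 this

lemma psW_neg (N : ℕ) (hd : l1*l2 ∣ N) (hl1m : l1 % 4 = 3) (hl2m : l2 % 4 = 1) (g : (ZMod N)ˣ) : psW l1 l2 h N hd (-g) = - psW l1 l2 h N hd g := by
  rw [psW_apply, psW_apply, Units.val_neg, map_neg, ← neg_one_mul, map_mul, psiZ_neg_one l1 l2 h hl1m hl2m]; ring

lemma L_card (N : ℕ) [NeZero N] (hd : l1*l2 ∣ N) (hl1m : l1 % 4 = 3) (hl2m : l2 % 4 = 1) :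
    2 * (univ.filter (fun g : (ZMod N)ˣ => psW l1 l2 h N hd g = 1)).card = Nat.totient N := by
  have h1 := card_filter_add_card_filter_not (s := (univ : Finset (ZMod N)ˣ)) (fun g : (ZMod N)ˣ => psW l1 l2 h N hd g = 1)
  rw [card_univ, ZMod.card_units_eq_totient] at h1
  have h2 : (univ.filter (fun g : (ZMod N)ˣ => psW l1 l2 h N hd g = 1)).card = (univ.filter (fun g : (ZMod N)ˣ => ¬ psW l1 l2 h N hd g = 1)).card := by
    refine card_bij (fun g _ => -g) ?_ (fun _ _ _ _ h => neg_injective h) ?_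
    · intro g hg
      rw [mem_filter] at hg ⊢
      refine ⟨mem_univ _, ?_⟩
      rw [psW_neg _ _ _ _ _ hl1m hl2m, hg.2]; norm_num
    · intro g hg
      rw [mem_filter] at hg
      refine ⟨-g, ?_, neg_neg g⟩
      rw [mem_filter]
      refine ⟨mem_univ _, ?_⟩
      rw [psW_neg _ _ _ _ _ hl1m hl2m, (psW_sq l1 l2 h N hd g).resolve_left hg.2]; norm_num
  omega

lemma L_gen (N : ℕ) [NeZero N] (hd : l1*l2 ∣ N) (hl1m : l1 % 4 = 3) (hl2m : l2 % 4 = 1) (P : (ZMod N)ˣ)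
    (hP : psW l1 l2 h N hd P = 1) (hord : orderOf P = Nat.totient N / 2) :
    (range (orderOf P)).image (fun j => P^j) = univ.filter (fun g : (ZMod N)ˣ => psW l1 l2 h N hd g = 1) := by
  apply eq_of_subset_of_card_le
  · intro g hg
    rw [mem_image] at hg
    obtain ⟨j, _, rfl⟩ := hg
    rw [mem_filter]
    exact ⟨mem_univ _, by rw [map_pow, hP, one_pow]⟩
  · rw [card_image_of_injOn, card_range, hord, ← L_card l1 l2 h N hd hl1m hl2m]
    · omega
    · intro a ha b hb hab
      rw [coe_range] at ha hb
      exact pow_injOn_Iio_orderOf ha hb hab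

lemma L_sum (N : ℕ) [NeZero N] (hd : l1*l2 ∣ N) (hrad : ∀ x : ℕ, x.Coprime (l1*l2) → x.Coprime N) (hN : 1 < N) (hl1m : l1 % 4 = 3) (hl2m : l2 % 4 = 1) (p f H : ℕ) (hpN : p.Coprime N)
    (hf : orderOf (p : ZMod N) = f) (hff : f = Nat.totient N / 2)
    (hP : psiZ l1 l2 h p = 1) (hH : |∑ k : ZMod (l1*l2), psiZ l1 l2 h k * (k.val : ℤ)| ≤ (l1*l2 : ℕ) * (H:ℤ))
    (u : ℕ) (hu : u.Coprime N) : 2 * ∑ j ∈ range f, (p^j*u)%N ≤ N * f + N * H := by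
  let P := ZMod.unitOfCoprime p hpN
  let U := ZMod.unitOfCoprime u hu
  have hPo : orderOf P = f := by rw [← hf, ← orderOf_units]; rfl
  have hP1 : psW l1 l2 h N hd P = 1 := by
    rw [psW_apply, ZMod.coe_unitOfCoprime, map_natCast, hP]
  have hgen := L_gen l1 l2 h N hd hl1m hl2m P hP1 (by rw [hPo, hff])
  have e1 : ∑ j ∈ range f, (((p^j*u)%N : ℕ) : ℤ) = ∑ g ∈ univ.filter (fun g : (ZMod N)ˣ => psW l1 l2 h N hd g = 1), (((g*U : (ZMod N)ˣ) : ZMod N).val : ℤ) := by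
    rw [← hgen, sum_image, hPo]
    · refine sum_congr rfl fun j _ => ?_
      rw [Units.val_mul, Units.val_pow_eq_pow_val, ZMod.coe_unitOfCoprime, ZMod.coe_unitOfCoprime, ← Nat.cast_pow, ← Nat.cast_mul, ZMod.val_natCast]
    · intro a ha b hb hab
      rw [coe_range] at ha hb
      exact pow_injOn_Iio_orderOf ha hb hab
  have e2 : 2 * ∑ j ∈ range f, (((p^j*u)%N : ℕ) : ℤ) = ∑ g : (ZMod N)ˣ, (((g*U : (ZMod N)ˣ) : ZMod N).val : ℤ) + ∑ g : (ZMod N)ˣ, psW l1 l2 h N hd g * (((g*U : (ZMod N)ˣ) : ZMod N).val : ℤ) := by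
    rw [e1, sum_filter, ← sum_add_distrib, mul_sum]
    refine sum_congr rfl fun g _ => ?_
    rcases psW_sq l1 l2 h N hd g with h1 | h1
    · rw [if_pos h1, h1]; ring
    · rw [if_neg (by rw [h1]; norm_num), h1]; ring
  have e3 : ∑ g : (ZMod N)ˣ, (((g*U : (ZMod N)ˣ) : ZMod N).val : ℤ) = ∑ g : (ZMod N)ˣ, ((g : ZMod N).val : ℤ) :=
    Equiv.sum_comp (Equiv.mulRight U) (fun g : (ZMod N)ˣ => ((g : ZMod N).val : ℤ))
  have e4 : ∑ g : (ZMod N)ˣ, psW l1 l2 h N hd g * (((g*U : (ZMod N)ˣ) : ZMod N).val : ℤ) = psW l1 l2 h N hd U * ∑ g : (ZMod N)ˣ, psW l1 l2 h N hd g * ((g : ZMod N).val : ℤ) := by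
    rw [← Equiv.sum_comp (Equiv.mulRight U) (fun g : (ZMod N)ˣ => psW l1 l2 h N hd g * ((g : ZMod N).val : ℤ)), mul_sum]
    refine sum_congr rfl fun g _ => ?_
    rw [Equiv.coe_mulRight, map_mul]
    rcases psW_sq l1 l2 h N hd U with h1 | h1 <;> rw [h1] <;> ring
  have : Fact (1 < N) := ⟨hN⟩
  have e5 : 2 * ∑ g : (ZMod N)ˣ, ((g : ZMod N).val : ℤ) = N * Nat.totient N := by
    rw [two_mul]
    conv_lhs => enter [2]; rw [← Equiv.sum_comp (Equiv.neg (ZMod N)ˣ) (fun g : (ZMod N)ˣ => ((g : ZMod N).val : ℤ))]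
    rw [← sum_add_distrib]
    have : ∀ g : (ZMod N)ˣ, ((g : ZMod N).val : ℤ) + (((Equiv.neg (ZMod N)ˣ g : (ZMod N)ˣ) : ZMod N).val : ℤ) = N := by
      intro g
      rw [Equiv.neg_apply, Units.val_neg, ZMod.neg_val, if_neg g.ne_zero, Nat.cast_sub (ZMod.val_lt _).le]; ring
    rw [sum_congr rfl (fun g _ => this g), sum_const, card_univ, ZMod.card_units_eq_totient]
    simp [mul_comm]
  have e6 : ∑ g : (ZMod N)ˣ, psW l1 l2 h N hd g * ((g : ZMod N).val : ℤ) = ∑ i ∈ range N, psiZ l1 l2 h (i : ZMod (l1*l2)) * (i:ℤ) := by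
    classical
    rw [← K_sum_val N (fun i => psiZ l1 l2 h (i : ZMod (l1*l2)) * (i:ℤ))]
    have : ∑ x ∈ univ.filter (fun x : ZMod N => IsUnit x), psiZ l1 l2 h (x.val : ZMod (l1*l2)) * (x.val:ℤ) = ∑ x : ZMod N, psiZ l1 l2 h (x.val : ZMod (l1*l2)) * (x.val:ℤ) := by
      apply sum_subset (subset_univ _)
      intro x _ hx
      have hx' : ¬ IsUnit x := fun hh => hx (mem_filter.2 ⟨mem_univ _, hh⟩)
      rw [MulChar.map_nonunit, zero_mul]
      intro hu
      apply hx'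
      rw [ZMod.isUnit_iff_coprime] at hu
      have := (ZMod.isUnit_iff_coprime x.val N).2 (hrad _ hu)
      rwa [ZMod.natCast_zmod_val] at this
    rw [← this]
    refine sum_bij (fun g _ => (g : ZMod N)) (fun g _ => mem_filter.2 ⟨mem_univ _, g.isUnit⟩) (fun _ _ _ _ hh => Units.ext hh) ?_ ?_
    · intro x hx
      exact ⟨(mem_filter.1 hx).2.unit, mem_univ _, rfl⟩
    · intro g _
      rw [psW_val]
  have hne : psiZ l1 l2 h ≠ 1 := by
    intro h1
    have h2 := psiZ_neg_one l1 l2 h hl1m hl2m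
    rw [h1, MulChar.one_apply (isUnit_one.neg)] at h2
    norm_num at h2
  have hm0 : l1*l2 ≠ 0 := mul_ne_zero (Fact.out : l1.Prime).ne_zero (Fact.out : l2.Prime).ne_zero
  have : NeZero (l1*l2) := ⟨hm0⟩
  obtain ⟨s, hs⟩ := hd
  have e7 := K_block l1 l2 h hne s
  rw [← hs] at e7
  have hφ : 2 * f = Nat.totient N := by
    have := L_card l1 l2 h N ⟨s, hs⟩ hl1m hl2m
    omega
  have e8 : |∑ g : (ZMod N)ˣ, psW l1 l2 h N ⟨s, hs⟩ g * ((g : ZMod N).val : ℤ)| ≤ N * H := by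
    rw [e6, e7, abs_mul, Nat.abs_cast, hs]
    calc (s:ℤ) * _ ≤ s * ((l1*l2 : ℕ) * (H:ℤ)) := mul_le_mul_of_nonneg_left hH (by positivity)
      _ = _ := by push_cast; ring
  have e9 : psW l1 l2 h N ⟨s, hs⟩ U * ∑ g : (ZMod N)ˣ, psW l1 l2 h N ⟨s, hs⟩ g * ((g : ZMod N).val : ℤ) ≤ N * H := by
    rw [abs_le] at e8
    rcases psW_sq l1 l2 h N ⟨s, hs⟩ U with h1 | h1 <;> rw [h1] <;> linarith [e8.1, e8.2]
  have e10 : ∑ g : (ZMod N)ˣ, ((g : ZMod N).val : ℤ) = N * f := by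
    have : (Nat.totient N : ℤ) = 2 * f := by exact_mod_cast hφ.symm
    rw [this] at e5; linarith
  zify
  rw [e3, e4, e10] at e2
  push_cast at e2
  linarith
end

section
open Finset Polynomial IntermediateField

/-- rational polynomial families -/
def MG (z : ℂ) (g : ℕ → ℂ) : Prop := ∃ P : ℚ[X], ∀ i, g i = aeval (z^i) P

lemma MG.add {z : ℂ} {g k : ℕ → ℂ} (hg : MG z g) (hk : MG z k) : MG z (fun i => g i + k i) := by
  obtain ⟨P, hP⟩ := hg
  obtain ⟨Q, hQ⟩ := hk
  exact ⟨P + Q, fun i => by rw [map_add, ← hP, ← hQ]⟩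

lemma MG.mul {z : ℂ} {g k : ℕ → ℂ} (hg : MG z g) (hk : MG z k) : MG z (fun i => g i * k i) := by
  obtain ⟨P, hP⟩ := hg
  obtain ⟨Q, hQ⟩ := hk
  exact ⟨P * Q, fun i => by rw [map_mul, ← hP, ← hQ]⟩

lemma MG.const (z : ℂ) (c : ℤ) : MG z (fun _ => (c : ℂ)) :=
  ⟨(c : ℚ[X]), fun i => by rw [map_intCast]⟩

lemma MG.sub {z : ℂ} {g k : ℕ → ℂ} (hg : MG z g) (hk : MG z k) : MG z (fun i => g i - k i) := by
  obtain ⟨P, hP⟩ := hg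
  obtain ⟨Q, hQ⟩ := hk
  exact ⟨P - Q, fun i => by rw [map_sub, ← hP, ← hQ]⟩

lemma MG.sum {z : ℂ} {ι : Type*} (s : Finset ι) (g : ι → ℕ → ℂ) (hg : ∀ x ∈ s, MG z (g x)) : MG z (fun i => ∑ x ∈ s, g x i) := by
  classical
  induction s using Finset.induction_on with
  | empty => exact ⟨0, fun i => by simp⟩
  | insert a s ha ih =>
    have := (hg a (mem_insert_self a s)).add (ih fun x hx => hg x (mem_insert_of_mem hx))
    simpa [sum_insert ha] using this

lemma MG.root {n : ℕ} [NeZero n] {z : ℂ} (hz : IsPrimitiveRoot z n) {w : ℂ} (hw : w^n = 1) : MG z (fun i => w^i) := by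
  obtain ⟨k, _, hk⟩ := hz.eq_pow_of_pow_eq_one hw
  exact ⟨X^k, fun i => by rw [map_pow, aeval_X, ← hk]; ring⟩

lemma MG.rat {n : ℕ} [NeZero n] {z : ℂ} (hz : IsPrimitiveRoot z n) {g : ℕ → ℂ} (hg : MG z g)
    (h : ∀ i, i.Coprime n → g i = g 1) : ∃ r : ℚ, g 1 = r := by
  obtain ⟨P, hP⟩ := hg
  have hint : IsIntegral ℚ z := (hz.isIntegral (NeZero.pos n)).tower_top
  have : FiniteDimensional ℚ ℚ⟮z⟯ := IntermediateField.adjoin.finiteDimensional hint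
  set y : ℚ⟮z⟯ := AdjoinSimple.gen ℚ z with hy
  have hyz : (algebraMap ℚ⟮z⟯ ℂ) y = z := AdjoinSimple.algebraMap_gen ℚ z
  have hyp : IsPrimitiveRoot y n := by
    rw [← hyz] at hz
    exact hz.of_map_of_injective (algebraMap ℚ⟮z⟯ ℂ).injective
  have key : ∀ σ : ℚ⟮z⟯ →ₐ[ℚ] ℂ, σ (aeval y P) = g 1 := by
    intro σ
    have h1 : IsPrimitiveRoot (σ y) n := hyp.map_of_injective σ.toRingHom.injective
    obtain ⟨i, _, hi, hiy⟩ := hz.isPrimitiveRoot_iff.1 h1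
    rw [← aeval_algHom_apply, ← hiy, ← hP, h i hi]
  have h3 := trace_eq_sum_embeddings (K := ℚ) ℂ (x := aeval y P)
  rw [sum_congr rfl (fun σ _ => key σ), sum_const, card_univ, AlgHom.card, nsmul_eq_mul] at h3
  have h4 : ((Module.finrank ℚ ℚ⟮z⟯ : ℕ) : ℂ) ≠ 0 := by
    exact_mod_cast Module.finrank_pos.ne'
  refine ⟨Algebra.trace ℚ ℚ⟮z⟯ (aeval y P) / (Module.finrank ℚ ℚ⟮z⟯ : ℕ), ?_⟩
  push_cast
  rw [eq_div_iff h4, mul_comm, ← h3]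
  rfl

variable {F : Type*} [Field F] [Fintype F]

/-- conjugates of a gauss sum -/
noncomputable def gC (χ : MulChar F ℂ) (e : AddChar F ℂ) (i : ℕ) : ℂ := by
  classical exact ∑ x ∈ univ.filter (fun x : F => x ≠ 0), (χ x * e x)^i

lemma gC_eq (χ : MulChar F ℂ) (e : AddChar F ℂ) (i : ℕ) (hi : i ≠ 0) : gC χ e i = gaussSum (χ^i) (e^i) := by
  classical
  rw [gC, gaussSum, sum_filter]
  refine sum_congr rfl fun x _ => ?_
  rw [MulChar.pow_apply' _ hi, AddChar.pow_apply, mul_pow]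
  split_ifs with h
  · rfl
  · push Not at h
    rw [h, MulChar.map_zero, zero_pow hi, zero_mul]

lemma gC_MG (N p n : ℕ) [NeZero n] (hn : n = N*p) {z : ℂ} (hz : IsPrimitiveRoot z n) (χ : MulChar F ℂ) (hχ : χ^N = 1) (e : AddChar F ℂ) (he : ∀ x, e x ^ p = 1) :
    MG z (gC χ e) := by
  have hN0 : N ≠ 0 := by
    rintro rfl
    exact NeZero.ne n (by rw [hn, zero_mul])
  classical
  apply MG.sum
  intro x hx
  apply MG.root hz
  rw [hn, mul_pow, mul_comm N p, pow_mul (e x), he, one_pow, mul_one, mul_comm p N, pow_mul, ← MulChar.pow_apply' _ hN0, hχ, MulChar.one_apply (isUnit_iff_ne_zero.2 (mem_filter.1 hx).2), one_pow]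

lemma M_chi (p N : ℕ) [Fact p.Prime] [Algebra (ZMod p) F] (hc : N.Coprime (p-1)) (hN : N ≠ 0) (χ : MulChar F ℂ) (hχ : χ^N = 1) (i : ℕ) (hi : i.Coprime p) : χ (i : F) = 1 := by
  have h0 : (i : ZMod p) ≠ 0 := by
    intro h
    rw [ZMod.natCast_eq_zero_iff] at h
    exact (Fact.out : p.Prime).coprime_iff_not_dvd.1 hi.symm h
  have h1 : (i : F)^(p-1) = 1 := by
    have := congrArg (algebraMap (ZMod p) F) (ZMod.pow_card_sub_one_eq_one h0)
    simpa using this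
  have h2 : (i : F) ≠ 0 := by
    have := (map_ne_zero (algebraMap (ZMod p) F)).2 h0
    simpa using this
  have h3 : χ (i:F)^(p-1) = 1 := by rw [← map_pow, h1, map_one]
  have h4 : χ (i:F)^N = 1 := by rw [← MulChar.pow_apply' _ hN, hχ, MulChar.one_apply h2.isUnit]
  have h5 := Nat.dvd_gcd (orderOf_dvd_of_pow_eq_one h4) (orderOf_dvd_of_pow_eq_one h3)
  rw [hc.gcd_eq_one, Nat.dvd_one, orderOf_eq_one_iff] at h5
  exact h5

lemma M_shift (p N : ℕ) [Fact p.Prime] [Algebra (ZMod p) F] (hc : N.Coprime (p-1)) (hN : N ≠ 0) (χ : MulChar F ℂ) (hχ : χ^N = 1) (e : AddChar F ℂ) (i : ℕ) (hi : i.Coprime p) :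
    gaussSum χ (e^i) = gaussSum χ e := by
  have h1 := M_chi p N hc hN χ hχ i hi
  have h2 : IsUnit (i : F) := by
    by_contra h
    rw [MulChar.map_nonunit _ h] at h1
    exact zero_ne_one h1
  have := gaussSum_mulShift χ e h2.unit
  rw [IsUnit.unit_spec, h1, one_mul] at this
  rw [AddChar.pow_mulShift, this]

lemma M_inv (p N : ℕ) [Fact p.Prime] [Algebra (ZMod p) F] (hc : N.Coprime (p-1)) (hN : N ≠ 0) (χ : MulChar F ℂ) (hχ : χ^N = 1) (e : AddChar F ℂ) (he : ∀ x, e x ^ p = 1) :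
    gaussSum χ e⁻¹ = gaussSum χ e := by
  have hp : p.Prime := Fact.out
  rw [← M_shift p N hc hN χ hχ e (p-1)]
  · congr 1
    symm
    apply eq_inv_of_mul_eq_one_left
    rw [← pow_succ, Nat.sub_add_cancel hp.one_le]
    ext x
    rw [AddChar.pow_apply, he, AddChar.one_apply]
  · have h2 := Nat.coprime_self_sub_left (m := 1) (n := p) hp.one_le
    exact h2.2 (Nat.coprime_one_left p)
end

section
open Finset

variable (l1 l2 : ℕ) [Fact l1.Prime] [Fact l2.Prime] (h : l1.Coprime l2)
variable {F : Type*} [Field F] [Fintype F]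

lemma P_conj (N : ℕ) [NeZero N] (hd : l1*l2 ∣ N) (hl1m : l1 % 4 = 3) (hl2m : l2 % 4 = 1) (p f : ℕ) [Fact p.Prime] [Algebra (ZMod p) F] (hpN : p.Coprime N)
    (hf : orderOf (p : ZMod N) = f) (hff : f = Nat.totient N / 2)
    (hP : psiZ l1 l2 h p = 1) (χ : MulChar F ℂ) (hχ : χ^N = 1) (e : AddChar F ℂ) (he : ∀ x, e (x^p) = e x)
    (i : ℕ) (hi : i.Coprime N) :
    (psiZ l1 l2 h i = 1 ∧ gaussSum (χ^i) e = gaussSum χ e) ∨ (psiZ l1 l2 h i = -1 ∧ gaussSum (χ^i) e = gaussSum χ⁻¹ e) := by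
  let P := ZMod.unitOfCoprime p hpN
  let U := ZMod.unitOfCoprime i hi
  have hPo : orderOf P = f := by rw [← hf, ← orderOf_units]; rfl
  have hP1 : psW l1 l2 h N hd P = 1 := by
    rw [psW_apply, ZMod.coe_unitOfCoprime, map_natCast, hP]
  have hU1 : psW l1 l2 h N hd U = psiZ l1 l2 h i := by
    rw [psW_apply, ZMod.coe_unitOfCoprime, map_natCast]
  have hgen := L_gen l1 l2 h N hd hl1m hl2m P hP1 (by rw [hPo, hff])
  rcases psW_sq l1 l2 h N hd U with h1 | h1
  · left
    refine ⟨hU1 ▸ h1, ?_⟩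
    have : U ∈ univ.filter (fun g : (ZMod N)ˣ => psW l1 l2 h N hd g = 1) := mem_filter.2 ⟨mem_univ _, h1⟩
    rw [← hgen, mem_image] at this
    obtain ⟨j, _, hj⟩ := this
    have h2 : ((p^j : ℕ) : ZMod N) = (i : ℕ) := by
      have := congrArg Units.val hj
      rw [Units.val_pow_eq_pow_val, ZMod.coe_unitOfCoprime, ZMod.coe_unitOfCoprime] at this
      push_cast; exact this
    rw [ZMod.natCast_eq_natCast_iff] at h2
    have h3 : χ^(p^j) = χ^i := pow_eq_pow_iff_modEq.2 (h2.of_dvd (orderOf_dvd_of_pow_eq_one hχ))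
    rw [← h3, H_frob_pow p χ e he]
  · right
    refine ⟨hU1 ▸ h1, ?_⟩
    have : -U ∈ univ.filter (fun g : (ZMod N)ˣ => psW l1 l2 h N hd g = 1) := mem_filter.2 ⟨mem_univ _, by rw [psW_neg _ _ _ _ _ hl1m hl2m, h1]; norm_num⟩
    rw [← hgen, mem_image] at this
    obtain ⟨j, _, hj⟩ := this
    have h2 : ((p^j + i : ℕ) : ZMod N) = 0 := by
      have := congrArg Units.val hj
      rw [Units.val_pow_eq_pow_val, Units.val_neg, ZMod.coe_unitOfCoprime, ZMod.coe_unitOfCoprime] at this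
      push_cast; rw [this]; ring
    rw [ZMod.natCast_eq_zero_iff] at h2
    have h3 : χ^i = χ⁻¹^(p^j) := by
      rw [inv_pow]
      apply eq_inv_of_mul_eq_one_right
      rw [← pow_add]
      exact orderOf_dvd_iff_pow_eq_one.1 ((orderOf_dvd_of_pow_eq_one hχ).trans h2)
    rw [h3, H_frob_pow p _ e he]

lemma P_main (N : ℕ) [NeZero N] (hd : l1*l2 ∣ N) (hl1m : l1 % 4 = 3) (hl2m : l2 % 4 = 1) (p f : ℕ) [Fact p.Prime] [Algebra (ZMod p) F] (hpN : p.Coprime N)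
    (hc : N.Coprime (p-1))
    (hf : orderOf (p : ZMod N) = f) (hff : f = Nat.totient N / 2)
    (hP : psiZ l1 l2 h p = 1) (χ : MulChar F ℂ) (hχ : χ^N = 1) (e : AddChar F ℂ) (he : ∀ x, e (x^p) = e x) (hep : ∀ x, e x ^ p = 1) :
    ∃ r s : ℚ, gaussSum χ e + gaussSum χ⁻¹ e = r ∧ (gaussSum χ e - gaussSum χ⁻¹ e) * psiG l1 l2 h = s := by
  have hN0 : N ≠ 0 := NeZero.ne N
  have hp : p.Prime := Fact.out
  have : NeZero (N*p) := ⟨mul_ne_zero hN0 hp.ne_zero⟩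
  have hm0 : l1*l2 ≠ 0 := mul_ne_zero (Fact.out : l1.Prime).ne_zero (Fact.out : l2.Prime).ne_zero
  have : NeZero (l1*l2) := ⟨hm0⟩
  have hz := Complex.isPrimitiveRoot_exp (N*p) (NeZero.ne _)
  set z := Complex.exp (2 * Real.pi * Complex.I / (N*p : ℕ))
  have hχ' : χ⁻¹^N = 1 := by rw [inv_pow, hχ, inv_one]
  have m1 := gC_MG N p (N*p) rfl hz χ hχ e hep
  have m2 := gC_MG N p (N*p) rfl hz χ⁻¹ hχ' e hep
  have m3 : MG z (fun i => ∑ a : ZMod (l1*l2), ((psiZ l1 l2 h a : ℤ) : ℂ) * (ZMod.stdAddChar a : ℂ)^i) := by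
    apply MG.sum
    intro a _
    apply (MG.const z _).mul
    apply MG.root hz
    rw [← AddChar.map_nsmul_eq_pow]
    obtain ⟨s, hs⟩ := hd
    rw [hs, show l1*l2*s*p = (s*p)*(l1*l2) by ring, mul_nsmul', nsmul_eq_mul (l1*l2), CharP.cast_eq_zero, zero_mul, nsmul_zero, AddChar.map_zero_eq_one]
  have t : ∀ i : ℕ, ∑ a : ZMod (l1*l2), ((psiZ l1 l2 h a : ℤ) : ℂ) * (ZMod.stdAddChar a : ℂ)^i = (psiZ l1 l2 h i : ℂ) * psiG l1 l2 h := by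
    intro i
    rw [← psiC_apply, ← psiG_shift l1 l2 h hl1m hl2m]
    refine sum_congr rfl fun a _ => ?_
    rw [psiC_apply, ← AddChar.map_nsmul_eq_pow, nsmul_eq_mul]
  have hone : N*p ≠ 1 := by
    intro hh
    exact hp.one_lt.ne' (Nat.eq_one_of_mul_eq_one_left hh)
  have key : ∀ χ : MulChar F ℂ, χ^N = 1 → ∀ i, i.Coprime (N*p) → gC χ e i = gaussSum (χ^i) e := by
    intro χ hχ i hi
    have hi0 : i ≠ 0 := by
      rintro rfl
      rw [Nat.coprime_zero_left] at hi
      exact hone hi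
    rw [gC_eq _ _ _ hi0, M_shift p N hc hN0 _ (by rw [← pow_mul, mul_comm, pow_mul, hχ, one_pow]) _ _ hi.coprime_mul_left_right]
  have k1 := key χ hχ
  have k2 := key χ⁻¹ hχ'
  have c1 := P_conj l1 l2 h N hd hl1m hl2m p f hpN hf hff hP χ hχ e he
  have c2 := P_conj l1 l2 h N hd hl1m hl2m p f hpN hf hff hP χ⁻¹ hχ' e he
  rw [inv_inv] at c2
  have o1 : gC χ e 1 = gaussSum χ e := by rw [k1 1 (Nat.coprime_one_left _), pow_one]
  have o2 : gC χ⁻¹ e 1 = gaussSum χ⁻¹ e := by rw [k2 1 (Nat.coprime_one_left _), pow_one]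
  obtain ⟨r, hr⟩ := (m1.add m2).rat hz (by
    intro i hi
    rw [o1, o2, k1 i hi, k2 i hi]
    rcases c1 i hi.coprime_mul_right_right with ⟨a1, a2⟩ | ⟨a1, a2⟩ <;> rcases c2 i hi.coprime_mul_right_right with ⟨b1, b2⟩ | ⟨b1, b2⟩
    · rw [a2, b2]
    · rw [a1] at b1; norm_num at b1
    · rw [a1] at b1; norm_num at b1
    · rw [a2, b2, add_comm])
  obtain ⟨s, hs⟩ := ((m1.sub m2).mul m3).rat hz (by
    intro i hi
    rw [o1, o2, k1 i hi, k2 i hi, t, t, Nat.cast_one, map_one]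
    rcases c1 i hi.coprime_mul_right_right with ⟨a1, a2⟩ | ⟨a1, a2⟩ <;> rcases c2 i hi.coprime_mul_right_right with ⟨b1, b2⟩ | ⟨b1, b2⟩
    · rw [a2, b2, a1]
    · rw [a1] at b1; norm_num at b1
    · rw [a1] at b1; norm_num at b1
    · rw [a2, b2, a1]; push_cast; ring)
  refine ⟨r, s, ?_, ?_⟩
  · rw [← hr, o1, o2]
  · rw [← hs, o1, o2, t, Nat.cast_one, map_one]; push_cast; ring
end

section
open Finset

lemma Q_exists (l : ℕ) (hl : l.Prime) : ∃ V : ValuationSubring ℂ, V.valuation (l:ℂ) < 1 := by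
  by_contra hcon
  push Not at hcon
  have h1 : IsIntegral ℤ (((1/l : ℚ) : ℚ) : ℂ) := by
    apply J_int
    intro V
    rw [← ValuationSubring.valuation_le_one_iff]
    push_cast
    rw [map_div₀, map_one, one_div]
    exact inv_le_one_of_one_le₀ (hcon V)
  obtain ⟨n, hn⟩ := E_ratint h1
  have h0 : (l:ℚ) ≠ 0 := by exact_mod_cast hl.ne_zero
  rw [div_eq_iff h0] at hn
  have h2 : (1:ℤ) = n * l := by exact_mod_cast hn
  have h3 : (l:ℤ) ∣ 1 := ⟨n, by rw [h2]; ring⟩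
  have h4 : l ∣ 1 := by exact_mod_cast h3
  exact hl.one_lt.ne' (Nat.dvd_one.1 h4)

lemma Q_le (V : ValuationSubring ℂ) {x : ℂ} (hx : IsIntegral ℤ x) : V.valuation x ≤ 1 :=
  (V.valuation_le_one_iff x).2 (J_mem V hx)

lemma Q_dvd (l : ℕ) (hl : l.Prime) (V : ValuationSubring ℂ) (hV : V.valuation (l:ℂ) < 1) (n : ℤ) (hn : V.valuation (n:ℂ) < 1) : (l:ℤ) ∣ n := by
  by_contra h
  have hc : IsCoprime (l:ℤ) n := ((Nat.prime_iff_prime_int.1 hl).coprime_iff_not_dvd).2 h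
  obtain ⟨a, b, hab⟩ := hc
  have h1 : V.valuation ((a:ℂ) * l + b * n) < 1 := by
    refine Valuation.map_add_lt _ ?_ ?_
    · rw [map_mul]; exact mul_lt_one_of_nonneg_of_lt_one_right (Q_le V isIntegral_algebraMap) zero_le hV
    · rw [map_mul]; exact mul_lt_one_of_nonneg_of_lt_one_right (Q_le V isIntegral_algebraMap) zero_le hn
  have h2 : (a:ℂ) * l + b * n = 1 := by exact_mod_cast hab
  rw [h2, map_one] at h1
  exact lt_irrefl _ h1

lemma Q_root (l : ℕ) (hl : l.Prime) (hl2 : l ≠ 2) (V : ValuationSubring ℂ) (hV : V.valuation (l:ℂ) < 1) (r : ℕ) (x : ℂ) (hx : x^(l^r) = 1) :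
    V.valuation (x - 1) < 1 := by
  have hx' : x ∈ V := J_root V (pow_ne_zero r hl.ne_zero) hx
  obtain ⟨s, hs⟩ := exists_add_pow_prime_pow_eq hl (⟨x, hx'⟩ : V) (-1) r
  have hs2 := congrArg (fun y : V => (y:ℂ)) hs
  push_cast at hs2
  rw [hx, ((hl.odd_of_ne_two hl2).pow).neg_one_pow] at hs2
  have h3 : (x - 1)^(l^r) = (l:ℂ) * (x * (-1) * (s:ℂ)) := by
    rw [sub_eq_add_neg]; 
    refine hs2.trans ?_
    ring
  have h4 : V.valuation (x-1)^(l^r) < 1 := by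
    rw [← map_pow, h3, map_mul]
    refine mul_lt_one_of_nonneg_of_lt_one_left zero_le hV ?_
    rw [V.valuation_le_one_iff]
    exact V.mul_mem _ _ (V.mul_mem _ _ hx' (V.neg_mem _ V.one_mem)) s.2
  exact (pow_lt_one_iff (pow_ne_zero r hl.ne_zero)).1 h4

variable {F : Type*} [Field F] [Fintype F]

lemma Q_gauss (l : ℕ) (hl : l.Prime) (hl2 : l ≠ 2) (V : ValuationSubring ℂ) (hV : V.valuation (l:ℂ) < 1) (r : ℕ) (χ1 χ2 : MulChar F ℂ) (h1 : χ1^(l^r) = 1) (e : AddChar F ℂ) :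
    V.valuation (gaussSum (χ2*χ1) e - gaussSum χ2 e) < 1 := by
  rw [gaussSum, gaussSum, ← sum_sub_distrib]
  apply Valuation.map_sum_lt _ one_ne_zero
  intro x _
  by_cases hx : x = 0
  · rw [hx, MulChar.map_zero, MulChar.map_zero]; simp
  rw [MulChar.mul_apply, show χ2 x * χ1 x * e x - χ2 x * e x = χ2 x * e x * (χ1 x - 1) by ring, map_mul]
  refine mul_lt_one_of_nonneg_of_lt_one_right (Q_le V ((J_char_int χ2 x).mul (J_add_int e x))) zero_le ?_
  apply Q_root l hl hl2 V hV r
  rw [← MulChar.pow_apply' _ (pow_ne_zero r hl.ne_zero), h1, MulChar.one_apply (isUnit_iff_ne_zero.2 hx)]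

lemma Q_pure (l r p g : ℕ) [Fact p.Prime] [Algebra (ZMod p) F] (hl : l.Prime) (hl2 : l ≠ 2) (hr : 1 ≤ r)
    (hneg : (p : ZMod (l^r))^g = -1) (hc : (l^r).Coprime (p-1)) (hcard : Fintype.card F = p^(2*g)) (χ : MulChar F ℂ) (hχ : χ^(l^r) = 1) (hχ1 : χ ≠ 1)
    (e : AddChar F ℂ) (he : ∀ x, e (x^p) = e x) (hep : ∀ x, e x ^ p = 1) (he1 : e ≠ 1) : gaussSum χ e = (p:ℂ)^g := by
  have hdv : l^r ∣ p^g + 1 := by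
    rw [← ZMod.natCast_eq_zero_iff]; push_cast; rw [hneg]; ring
  have hinv : χ^(p^g) = χ⁻¹ := by
    apply eq_inv_of_mul_eq_one_left
    rw [← pow_succ]
    exact orderOf_dvd_iff_pow_eq_one.1 ((orderOf_dvd_of_pow_eq_one hχ).trans hdv)
  have h1 : gaussSum χ⁻¹ e = gaussSum χ e := by rw [← hinv, H_frob_pow p χ e he]
  have h2 := gaussSum_mul_gaussSum_eq_card hχ1 (AddChar.IsPrimitive.of_ne_one he1)
  rw [M_inv p (l^r) hc (pow_ne_zero r hl.ne_zero) χ⁻¹ (by rw [inv_pow, hχ, inv_one]) e hep, h1, hcard] at h2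
  have h3 : (gaussSum χ e)^2 = ((p:ℂ)^g)^2 := by
    rw [sq, h2]; push_cast; ring
  rcases sq_eq_sq_iff_eq_or_eq_neg.1 h3 with h4 | h4
  · exact h4
  exfalso
  obtain ⟨V, hV⟩ := Q_exists l hl
  have h5 := Q_gauss l hl hl2 V hV r χ 1 hχ e
  rw [one_mul, h4, gaussSum_one_left he1] at h5
  have h6 := Q_dvd l hl V hV (-(p:ℤ)^g - -1) (by push_cast; exact h5)
  have h7 : (l:ℤ) ∣ (p:ℤ)^g + 1 := by exact_mod_cast (dvd_pow_self l (by omega)).trans hdv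
  have h8 : (l:ℤ) ∣ 2 := by
    have := dvd_add h6 h7
    ring_nf at this
    exact this
  have h9 : l ∣ 2 := by exact_mod_cast h8
  exact hl2 ((Nat.prime_dvd_prime_iff_eq hl Nat.prime_two).1 h9)

lemma Q_cong (l1 l2 r1 r2 N p g : ℕ) [Fact p.Prime] [Algebra (ZMod p) F] (hl1 : l1.Prime) (hl2 : l2.Prime) (hne : l1 ≠ l2) (h12 : l1 ≠ 2) (h22 : l2 ≠ 2) (hr2 : 1 ≤ r2)
    (hN : N = l1^r1*l2^r2) (hneg : (p : ZMod (l2^r2))^g = -1) (hc : N.Coprime (p-1)) (hcard : Fintype.card F = p^(2*g)) (χ : MulChar F ℂ) (hχ : orderOf χ = N)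
    (e : AddChar F ℂ) (he : ∀ x, e (x^p) = e x) (hep : ∀ x, e x ^ p = 1) (he1 : e ≠ 1) (V : ValuationSubring ℂ) (hV : V.valuation (l1:ℂ) < 1) :
    V.valuation (gaussSum χ e + gaussSum χ⁻¹ e - 2 * (p:ℂ)^g) < 1 := by
  have hco : (l1^r1).Coprime (l2^r2) := Nat.Coprime.pow _ _ ((Nat.coprime_primes hl1 hl2).2 hne)
  obtain ⟨E, hE1, hE2⟩ := Nat.chineseRemainder hco 0 1
  obtain ⟨E', hE1', hE2'⟩ := Nat.chineseRemainder hco 1 0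
  have hsum : E + E' ≡ 1 [MOD N] := by
    rw [hN, ← Nat.modEq_and_modEq_iff_modEq_mul hco]
    exact ⟨hE1.add hE1', hE2.add hE2'⟩
  have hχ0 : χ^(E+E') = χ := by
    conv_rhs => rw [← pow_one χ]
    exact pow_eq_pow_iff_modEq.2 (by rw [hχ]; exact hsum)
  have d1 : l1^r1 ∣ E := (Nat.modEq_zero_iff_dvd).1 hE1
  have d2 : l2^r2 ∣ E' := (Nat.modEq_zero_iff_dvd).1 hE2'
  have c2 : (χ^E)^(l2^r2) = 1 := by
    rw [← pow_mul, ← orderOf_dvd_iff_pow_eq_one, hχ, hN]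
    exact mul_dvd_mul d1 dvd_rfl
  have c1 : (χ^E')^(l1^r1) = 1 := by
    rw [← pow_mul, ← orderOf_dvd_iff_pow_eq_one, hχ, hN, mul_comm]
    exact mul_dvd_mul d2 dvd_rfl
  have n2 : χ^E ≠ 1 := by
    intro h
    rw [← orderOf_dvd_iff_pow_eq_one, hχ, hN] at h
    have h3 := (Nat.modEq_zero_iff_dvd.2 ((dvd_mul_left _ _).trans h)).symm.trans hE2
    have h4 := (Nat.modEq_iff_dvd' (zero_le_one)).1 h3
    have h5 : l2 ∣ 1 := (dvd_pow_self l2 (by omega)).trans h4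
    exact hl2.one_lt.ne' (Nat.dvd_one.1 h5)
  have hc2 : (l2^r2).Coprime (p-1) := hc.coprime_dvd_left (by rw [hN]; exact dvd_mul_left _ _)
  have g1 := Q_pure l2 r2 p g hl2 h22 hr2 hneg hc2 hcard (χ^E) c2 n2 e he hep he1
  have g2 := Q_pure l2 r2 p g hl2 h22 hr2 hneg hc2 hcard (χ^E)⁻¹ (by rw [inv_pow, c2, inv_one]) (by rw [Ne, inv_eq_one]; exact n2) e he hep he1
  have v1 := Q_gauss l1 hl1 h12 V hV r1 (χ^E') (χ^E) c1 e
  have v2 := Q_gauss l1 hl1 h12 V hV r1 (χ^E')⁻¹ (χ^E)⁻¹ (by rw [inv_pow, c1, inv_one]) e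
  rw [← pow_add, hχ0, g1] at v1
  rw [← mul_inv, ← pow_add, hχ0, g2] at v2
  rw [show gaussSum χ e + gaussSum χ⁻¹ e - 2 * (p:ℂ)^g = (gaussSum χ e - (p:ℂ)^g) + (gaussSum χ⁻¹ e - (p:ℂ)^g) by ring]
  exact Valuation.map_add_lt _ v1 v2
end

section
lemma R_end (p l1 m g k : ℕ) (hp : p.Prime) (hl1 : l1.Prime) (hlp : ¬ l1 ∣ p) (hm : Squarefree m) (G G' T S : ℂ)
    (hGG : G * G' = (p:ℂ)^(2*g)) (r s : ℚ) (hr : G + G' = r) (hs : (G - G') * T = s) (hT : T^2 = -(m:ℂ)) (hS : S^2 = -(m:ℂ))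
    (i1 : IsIntegral ℤ ((p:ℂ)^(g+k) / G')) (i2 : IsIntegral ℤ ((p:ℂ)^(g+k) / G))
    (V : ValuationSubring ℂ) (hV : V.valuation (l1:ℂ) < 1) (hv : V.valuation (G + G' - 2 * (p:ℂ)^g) < 1) :
    ∃ a b : ℤ, 4 * (p:ℤ)^(2*k) = a^2 + m * b^2 ∧ a ≡ 2 * (p:ℤ)^k [ZMOD (l1:ℤ)] ∧
      G = (1/2:ℂ) * (p:ℂ)^((g:ℤ) - (k:ℤ)) * ((a:ℂ) + (b:ℂ) * S) := by
  have hp0 : (p:ℂ) ≠ 0 := by exact_mod_cast hp.ne_zero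
  have hm0 : (m:ℂ) ≠ 0 := by exact_mod_cast hm.ne_zero
  have hGG0 : G * G' ≠ 0 := by rw [hGG]; exact pow_ne_zero _ hp0
  have hG0 : G ≠ 0 := left_ne_zero_of_mul hGG0
  have hG0' : G' ≠ 0 := right_ne_zero_of_mul hGG0
  set q : ℂ := (p:ℂ)^g with hq
  set w : ℂ := (p:ℂ)^k with hw
  have hq0 : q ≠ 0 := pow_ne_zero _ hp0
  have hqq : G * G' = q^2 := by rw [hGG, hq]; ring
  have e1 : (p:ℂ)^(g+k) / G' = G * w / q := by
    rw [pow_add, div_eq_div_iff hG0' hq0, ← hq, ← hw]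
    linear_combination (-w) * hqq
  have e2 : (p:ℂ)^(g+k) / G = G' * w / q := by
    rw [pow_add, div_eq_div_iff hG0 hq0, ← hq, ← hw]
    linear_combination (-w) * hqq
  rw [e1] at i1
  rw [e2] at i2
  set α := G * w / q with hα
  set β := G' * w / q with hβ
  have hαβ : α * β = w^2 := by
    rw [hα, hβ]; field_simp; linear_combination w^2 * hqq
  -- a
  have ha1 : α + β = ((r * p^k / p^g : ℚ) : ℂ) := by
    push_cast; rw [← hr, ← hq, ← hw, hα, hβ]; ring
  obtain ⟨a, ha⟩ := E_ratint (ha1 ▸ i1.add i2)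
  have ha2 : α + β = (a:ℂ) := by rw [ha1, ha]; push_cast; rfl
  -- b
  have hTS : T = S ∨ T = -S := sq_eq_sq_iff_eq_or_eq_neg.1 (by rw [hT, hS])
  obtain ⟨ε, hε2, hε⟩ : ∃ ε : ℚ, ε^2 = 1 ∧ T = ε * S := by
    rcases hTS with h | h
    · exact ⟨1, by norm_num, by rw [h]; simp⟩
    · exact ⟨-1, by norm_num, by rw [h]; simp⟩
  have hε2' : (ε:ℂ)^2 = 1 := by exact_mod_cast hε2
  have hb1 : α - β = ((-(s * p^k / p^g) * ε / m : ℚ) : ℂ) * S := by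
    push_cast
    rw [← hs, ← hq, ← hw, hα, hβ, hε]
    field_simp
    linear_combination (w*(G - G')) * (S^2) * hε2' + (w*(G-G')) * hS
  obtain ⟨b', hb'⟩ : ∃ b' : ℚ, b' = -(s * p^k / p^g) * ε / m := ⟨_, rfl⟩
  rw [← hb'] at hb1
  have hb2 : IsIntegral ℤ (((m * b'^2 : ℚ) : ℚ) : ℂ) := by
    have : (((m * b'^2 : ℚ) : ℚ) : ℂ) = -((α - β)^2) := by
      rw [hb1]; push_cast; linear_combination (b':ℂ)^2 * hS
    rw [this]
    exact ((i1.sub i2).pow 2).neg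
  obtain ⟨c, hc⟩ := E_ratint hb2
  obtain ⟨b, hb⟩ := E_sqfree hm hc
  have hb3 : α - β = (b:ℂ) * S := by rw [hb1, hb]; push_cast; rfl
  refine ⟨a, b, ?_, ?_, ?_⟩
  · have : (4:ℂ) * (p:ℂ)^(2*k) = (a:ℂ)^2 + m * (b:ℂ)^2 := by
      rw [← ha2, mul_comm 2 k, pow_mul, ← hw, ← hαβ]
      linear_combination (-(b:ℂ)^2) * hS + (-(α - β) - b*S) * hb3
    exact_mod_cast this
  · have h1 : ((((p:ℤ)^g * (a - 2 * (p:ℤ)^k) : ℤ)) : ℂ) = (p:ℂ)^k * (G + G' - 2 * (p:ℂ)^g) := by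
      push_cast
      rw [← ha2, ← hq, ← hw, hα, hβ]; field_simp
    have h2 : V.valuation ((((p:ℤ)^g * (a - 2 * (p:ℤ)^k) : ℤ)) : ℂ) < 1 := by
      rw [h1, map_mul]
      refine mul_lt_one_of_nonneg_of_lt_one_right (Q_le V ?_) zero_le hv
      exact IsIntegral.pow isIntegral_algebraMap k
    have h3 := Q_dvd l1 hl1 V hV _ h2
    have hpr := Nat.prime_iff_prime_int.1 hl1
    rcases hpr.dvd_or_dvd h3 with h4 | h4
    · exact absurd (by exact_mod_cast hpr.dvd_of_dvd_pow h4) hlp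
    · exact (Int.modEq_iff_dvd.2 h4).symm
  · rw [← ha2, ← hb3, zpow_sub₀ hp0, zpow_natCast, zpow_natCast, ← hq, ← hw, hα, hβ]
    have hw0 : w ≠ 0 := pow_ne_zero _ hp0
    field_simp
    ring
end


theorem statement4 (p l1 l2 r1 r2 N f : ℕ) (hp : p.Prime)
    (hl1 : l1.Prime) (hl2 : l2.Prime) (hne : l1 ≠ l2)
    (hl1m : l1 % 4 = 3) (hl2m : l2 % 4 = 1)
    (hr1 : 1 ≤ r1) (hr2 : 1 ≤ r2) (hN : N = l1 ^ r1 * l2 ^ r2) (hNp : Nat.gcd N p = 1)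
    (hord1 : orderOf (p : ZMod (l1 ^ r1)) = Nat.totient (l1 ^ r1))
    (hord2 : orderOf (p : ZMod (l2 ^ r2)) = Nat.totient (l2 ^ r2))
    (hf : orderOf (p : ZMod N) = f) (hind : f = Nat.totient N / 2)
    (F : Type) [Field F] [Fintype F] [Algebra (ZMod p) F]
    (hcard : Fintype.card F = p ^ f)
    (χ : MulChar F ℂ) (hχord : orderOf χ = N) :
    Even (classNumSqrtNeg (l1 * l2)) ∧
      ∃ a b : ℤ,
        4 * (p : ℤ) ^ classNumSqrtNeg (l1 * l2) = a ^ 2 + (l1 : ℤ) * (l2 : ℤ) * b ^ 2 ∧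
        a ≡ 2 * (p : ℤ) ^ (classNumSqrtNeg (l1 * l2) / 2) [ZMOD (l1 : ℤ)] ∧
        gaussSumN p χ 1 =
          (1 / 2 : ℂ) * (p : ℂ) ^ (((f : ℤ) - (classNumSqrtNeg (l1 * l2) : ℤ)) / 2) *
            ((a : ℂ) + (b : ℂ) * sqrtNeg (l1 * l2)) := by
  have : Fact p.Prime := ⟨hp⟩
  have : Fact l1.Prime := ⟨hl1⟩
  have : Fact l2.Prime := ⟨hl2⟩
  have h : l1.Coprime l2 := (Nat.coprime_primes hl1 hl2).2 hne
  have h12 : l1 ≠ 2 := by rintro rfl; norm_num at hl1m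
  have h22 : l2 ≠ 2 := by rintro rfl; norm_num at hl2m
  obtain ⟨hev, hH⟩ := G_main l1 l2 h hl1m hl2m
  refine ⟨hev, ?_⟩
  set H := classNumSqrtNeg (l1*l2) with hHdef
  obtain ⟨k, hk⟩ := hev
  have hk2 : H = 2*k := by omega
  have hd : l1*l2 ∣ N := by
    rw [hN]; exact mul_dvd_mul (dvd_pow_self _ (by omega)) (dvd_pow_self _ (by omega))
  have hN0 : N ≠ 0 := by
    rw [hN]; exact mul_ne_zero (pow_ne_zero _ hl1.ne_zero) (pow_ne_zero _ hl2.ne_zero)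
  have : NeZero N := ⟨hN0⟩
  have hl1N : l1 ∣ N := (dvd_mul_right _ _).trans hd
  have hN1 : 1 < N := lt_of_lt_of_le hl1.one_lt (Nat.le_of_dvd (Nat.pos_of_ne_zero hN0) hl1N)
  have hpN : p.Coprime N := Nat.Coprime.symm hNp
  have hq1 := K_quad l1 r1 p h12 hr1 hord1
  have hq2 := K_quad l2 r2 p h22 hr2 hord2
  have hP : psiZ l1 l2 h (p:ℕ) = 1 := by
    rw [psiZ_nat, hq1, hq2]; norm_num
  have hnd : ∀ l : ℕ, l.Prime → ∀ [Fact l.Prime], quadraticChar (ZMod l) (p : ZMod l) = -1 → l.Coprime (p-1) := by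
    intro l hl _ hq
    rw [hl.coprime_iff_not_dvd]
    intro hdv
    have h1 : ((p - 1 : ℕ) : ZMod l) = 0 := (ZMod.natCast_eq_zero_iff _ _).2 hdv
    rw [Nat.cast_sub hp.one_le, Nat.cast_one, sub_eq_zero] at h1
    rw [h1, map_one] at hq
    norm_num at hq
  have hc : N.Coprime (p-1) := by
    rw [hN]
    exact Nat.Coprime.mul_left ((hnd l1 hl1 hq1).pow_left _) ((hnd l2 hl2 hq2).pow_left _)
  have hrad : ∀ x : ℕ, x.Coprime (l1*l2) → x.Coprime N := by
    intro x hx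
    rw [hN]
    exact Nat.Coprime.mul_right (hx.coprime_mul_right_right.pow_right _) (hx.coprime_mul_left_right.pow_right _)
  have hco : (l1^r1).Coprime (l2^r2) := Nat.Coprime.pow _ _ h
  obtain ⟨u, hu⟩ : ∃ u, Nat.totient (l1^r1) = 2 * u ∧ Odd u := by
    rw [Nat.totient_prime_pow hl1 (by omega)]
    refine ⟨l1^(r1-1) * ((l1-1)/2), ?_, ?_⟩
    · have : l1 - 1 = 2 * ((l1-1)/2) := by omega
      conv_lhs => rw [this]
      ring
    · refine Odd.mul ((hl1.odd_of_ne_two h12).pow) ?_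
      rw [Nat.odd_iff]; omega
  obtain ⟨v, hv⟩ : ∃ v, Nat.totient (l2^r2) = 2 * v := by
    rw [Nat.totient_prime_pow hl2 (by omega)]
    refine ⟨l2^(r2-1) * ((l2-1)/2), ?_⟩
    have : l2 - 1 = 2 * ((l2-1)/2) := by omega
    conv_lhs => rw [this]
    ring
  have hfg : f = 2 * (v*u) := by
    rw [hind, hN, Nat.totient_mul hco, hu.1, hv, show 2*u*(2*v) = 2*(2*(v*u)) by ring]
    omega
  have hneg : (p : ZMod (l2^r2))^(v*u) = -1 := by
    have := K_neg_one l2 r2 p hl2 h22 hr2 hord2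
    rw [hv, Nat.mul_div_cancel_left _ (by norm_num)] at this
    rw [pow_mul, this, hu.2.neg_one_pow]
  set g := v*u with hg
  have hNq : N ∣ p^f - 1 := by
    have h1 : ((p^f : ℕ) : ZMod N) = 1 := by
      push_cast; rw [← hf, pow_orderOf_eq_one]
    rw [← ZMod.natCast_eq_zero_iff, Nat.cast_sub (Nat.one_le_pow _ _ hp.pos), h1]; simp
  have ht : ∀ u, u.Coprime N → ∑ j ∈ Finset.range f, (p^j*u)%N ≤ N * (g+k) := by
    intro u hu
    have := L_sum l1 l2 h N hd hrad hN1 hl1m hl2m p f H hpN hf hind hP hH u hu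
    rw [hk2] at this
    have e : N * f + N * (2*k) = 2 * (N * (g+k)) := by rw [hfg]; ring
    omega
  have hζ : IsPrimitiveRoot (zetaP p) p := Complex.isPrimitiveRoot_exp p hp.ne_zero
  obtain ⟨e, he⟩ : ∃ e : AddChar F ℂ, ∀ x, e x = zetaP p ^ (Algebra.trace (ZMod p) F x).val :=
    ⟨(AddChar.zmodChar p hζ.pow_eq_one).compAddMonoidHom (Algebra.trace (ZMod p) F).toAddMonoidHom, fun x => by
      rw [AddChar.compAddMonoidHom_apply, AddChar.zmodChar_apply]; rfl⟩
  have hep : ∀ x, e x ^ p = 1 := by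
    intro x; rw [he, ← pow_mul, mul_comm, pow_mul, hζ.pow_eq_one, one_pow]
  have hefr : ∀ x, e (x^p) = e x := by
    intro x; rw [he, he, H_trace_frob p]
  have he1 : e ≠ 1 := by
    intro h1
    obtain ⟨x, hx⟩ := Algebra.trace_surjective (ZMod p) F 1
    have h2 := he x
    have : Fact (1 < p) := ⟨hp.one_lt⟩
    rw [hx, h1, AddChar.one_apply, ZMod.val_one, pow_one] at h2
    exact hp.one_lt.ne' (hζ.unique (h2 ▸ IsPrimitiveRoot.one))
  have hGN : gaussSumN p χ 1 = gaussSum χ e := by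
    rw [gaussSumN, pow_one, gaussSum, Finset.sum_filter]
    refine Finset.sum_congr rfl fun x _ => ?_
    rw [he]
    split_ifs with hx
    · rfl
    · push Not at hx
      rw [hx, MulChar.map_zero, zero_mul]
  have hχN : χ^N = 1 := by rw [← hχord, pow_orderOf_eq_one]
  have hχN' : χ⁻¹^N = 1 := by rw [inv_pow, hχN, inv_one]
  have hχ1 : χ ≠ 1 := by
    rintro rfl
    rw [orderOf_one] at hχord
    omega
  have hGG : gaussSum χ e * gaussSum χ⁻¹ e = (p:ℂ)^(2*g) := by
    have h2 := gaussSum_mul_gaussSum_eq_card hχ1 (AddChar.IsPrimitive.of_ne_one he1)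
    rw [M_inv p N hc hN0 χ⁻¹ hχN' e hep, hcard, hfg] at h2
    rw [h2]; push_cast; rfl
  obtain ⟨r, s, hr, hs⟩ := P_main l1 l2 h N hd hl1m hl2m p f hpN hc hf hind hP χ hχN e hefr hep
  obtain ⟨V, hV⟩ := Q_exists l1 hl1
  have hv := Q_cong l1 l2 r1 r2 N p g hl1 hl2 hne h12 h22 hr2 hN hneg hc (by rw [hcard, hfg]) χ hχord e hefr hep he1 V hV
  have i1 : IsIntegral ℤ ((p:ℂ)^(g+k) / gaussSum χ⁻¹ e) := J_int fun V =>
    J_main p f hcard (zetaP p) hζ e he he1 χ⁻¹ N hN1 (by rw [orderOf_inv, hχord]) hNq (g+k) ht V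
  have i2 : IsIntegral ℤ ((p:ℂ)^(g+k) / gaussSum χ e) := J_int fun V =>
    J_main p f hcard (zetaP p) hζ e he he1 χ N hN1 hχord hNq (g+k) ht V
  have hlp : ¬ l1 ∣ p := by
    intro hdv
    have := Nat.dvd_gcd hl1N hdv
    rw [hNp, Nat.dvd_one] at this
    exact hl1.one_lt.ne' this
  have hsf : Squarefree (l1*l2) := (Nat.squarefree_mul h).2 ⟨hl1.squarefree, hl2.squarefree⟩
  obtain ⟨a, b, q1, q2, q3⟩ := R_end p l1 (l1*l2) g k hp hl1 hlp hsf (gaussSum χ e) (gaussSum χ⁻¹ e) (psiG l1 l2 h) (sqrtNeg (l1*l2))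
    hGG r s hr hs (psiG_sq l1 l2 h hl1m hl2m) (sqrtNeg_sq _) i1 i2 V hV hv
  refine ⟨a, b, ?_, ?_, ?_⟩
  · rw [hk2, q1]; push_cast; ring
  · rw [hk2, Nat.mul_div_cancel_left _ (by norm_num)]; exact q2
  · rw [hGN, q3, hk2, hfg]
    congr 3
    push_cast
    omega
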